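/- arXiv:2103.08703 — 9 statements merged into one kernel-verified Lean document; each statement's English description precedes it below -/
import Mathlib

section
/- Let q be a prime power with q odd, and let d ≥ 2 be an integer coprime to the characteristic of 𝔽_q. Then any collection B_1, …, B_n of pairwise mutually unbiased orthonormal bases of 𝔽_{q²}^d satisfies n ≤ d + 1; in particular 1 ≤ M_d(𝔽_{q²}) ≤ d + 1. -/
open Finset

/-- The σ-Hermitian inner product on `F^d`, where σ is the `q`-power Frobenius:
`⟨u,v⟩ = ∑ j, (u j)^q * v j`. -/
def hermInner {F : Type*} [Field F] (q : ℕ) {d : ℕ} (u v : Fin d → F) : F :=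
  ∑ j, (u j) ^ q * v j

/-- A family of `d` vectors in `F^d` is an orthonormal basis iff the pairwise
Hermitian inner products are given by the Kronecker delta. -/
def IsON {F : Type*} [Field F] (q : ℕ) {d : ℕ} (b : Fin d → Fin d → F) : Prop :=
  ∀ i j, hermInner q (b i) (b j) = if i = j then 1 else 0

/-- Two orthonormal bases are mutually unbiased iff the relative norm
`N(α) = α · α^q = α^(q+1)` of every cross inner product equals `(d : F)⁻¹`. -/
def IsMUB {F : Type*} [Field F] (q : ℕ) {d : ℕ} (b c : Fin d → Fin d → F) : Prop :=
  ∀ i j, (hermInner q (b i) (c j)) ^ (q + 1) = (d : F)⁻¹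

theorem aux_indep {F V : Type*} [Field F] [AddCommGroup V] [Module F V] (n m : ℕ)
    (hm : ((m + 1 : ℕ) : F) ≠ 0)
    (P : Fin n → Fin m → V) (I : V) (T : V →ₗ[F] F) (L : Fin n → Fin m → V →ₗ[F] F)
    (hTI : T I = ((m + 1 : ℕ) : F)) (hTP : ∀ i a, T (P i a) = 1)
    (hLI : ∀ i a, L i a I = 1)
    (hL1 : ∀ i a b, L i a (P i b) = if a = b then 1 else 0)
    (hL2 : ∀ i j a b, i ≠ j → L i a (P j b) = ((m + 1 : ℕ) : F)⁻¹) :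
    LinearIndependent F (fun x : Option (Fin n × Fin m) =>
      x.elim I (fun y => P y.1 y.2 - ((m + 1 : ℕ) : F)⁻¹ • I)) := by
  rw [Fintype.linearIndependent_iff]
  intro g hg
  rw [Fintype.sum_option] at hg
  simp only [Option.elim] at hg
  have h0 : g none = 0 := by
    have := congrArg T hg
    simp only [map_add, map_sum, map_smul, map_sub, hTI, hTP, smul_eq_mul, map_zero,
      inv_mul_cancel₀ hm, sub_self, mul_zero, Finset.sum_const_zero, add_zero] at this
    exact (mul_eq_zero.1 this).resolve_right hm
  have h1 : ∀ j b, g (some (j, b)) = (∑ a, g (some (j, a))) * ((m + 1 : ℕ) : F)⁻¹ := by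
    intro j b
    have := congrArg (L j b) hg
    simp only [map_add, map_sum, map_smul, map_sub, hLI, smul_eq_mul, map_zero, h0, zero_mul,
      zero_add, mul_one] at this
    rw [Fintype.sum_prod_type, Finset.sum_eq_single j] at this
    · simp only [hL1, mul_sub, Finset.sum_sub_distrib, ← Finset.sum_mul] at this
      simp at this
      push_cast
      exact sub_eq_zero.1 this
    · intro i _ hij
      apply Finset.sum_eq_zero
      intro a _
      rw [hL2 _ _ _ _ (Ne.symm hij)]
      simp
    · simp
  have h2 : ∀ j, (∑ a, g (some (j, a))) = 0 := by
    intro j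
    have h3 : (∑ a, g (some (j, a))) = ∑ a : Fin m, (∑ a, g (some (j, a))) * ((m + 1 : ℕ) : F)⁻¹ :=
      Finset.sum_congr rfl (fun b _ => h1 j b)
    rw [Finset.sum_const, Finset.card_univ, Fintype.card_fin, nsmul_eq_mul] at h3
    generalize (∑ a, g (some (j, a))) = S at h3
    field_simp at h3
    push_cast at h3
    linear_combination h3
  rintro (_ | ⟨j, b⟩)
  · exact h0
  · rw [h1, h2, zero_mul]

theorem stmt0 (q : ℕ) (hq : IsPrimePow q) (hodd : Odd q)
    (F : Type) [Field F] [Fintype F] (hF : Fintype.card F = q ^ 2)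
    (d : ℕ) (hd : 2 ≤ d) (hcop : Nat.Coprime d (ringChar F)) :
    (∀ (n : ℕ) (B : Fin n → Fin d → Fin d → F),
        (∀ i, IsON q (B i)) → (∀ i j, i ≠ j → IsMUB q (B i) (B j)) → n ≤ d + 1)
    ∧ (∃ b : Fin d → Fin d → F, IsON q b) := by
  have hq0 : q ≠ 0 := hq.ne_zero
  refine ⟨?_, fun i => Pi.single i 1, ?_⟩
  swap
  · intro i j
    unfold hermInner
    rw [Finset.sum_eq_single i]
    · simp [Pi.single_apply]
    · intro b _ hb
      simp [Pi.single_apply, hb, hq0]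
    · simp
  intro n B hON hMUB
  have hdF : (d : F) ≠ 0 := by
    intro h
    rw [ringChar.spec] at h
    have h1 := Nat.Coprime.eq_one_of_dvd hcop.symm h
    exact CharP.ringChar_ne_one h1
  have hσ : ∀ x : F, (x ^ q) ^ q = x := by
    intro x
    rw [← pow_mul, ← sq, ← hF, FiniteField.pow_card]
  have hherm : ∀ u v : Fin d → F, hermInner q v u = (hermInner q u v) ^ q := by
    intro u v
    obtain ⟨r, k, hr, hk, rfl⟩ := hq
    have hr' := hr.nat_prime
    haveI : Fact r.Prime := ⟨hr'⟩
    haveI : CharP F r := by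
      obtain ⟨p, hp⟩ := CharP.exists F
      obtain ⟨e, hp', he⟩ := FiniteField.card F p
      have : r ∣ p ^ (e : ℕ) := by
        rw [← he, hF, ← pow_mul]
        exact dvd_pow_self r (by omega)
      have := (Nat.prime_dvd_prime_iff_eq hr' hp').1 (hr'.dvd_of_dvd_pow this)
      rw [this]; exact hp
    unfold hermInner
    rw [sum_pow_char_pow]
    apply Finset.sum_congr rfl
    intro j _
    rw [mul_pow, hσ, mul_comm]
  obtain ⟨m, rfl⟩ : ∃ m, d = m + 1 := ⟨d - 1, by omega⟩
  let P : Fin n → Fin m → (Matrix (Fin (m+1)) (Fin (m+1)) F) := fun i a => Matrix.of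
    fun x y => B i a.castSucc x * B i a.castSucc y ^ q
  let L : Fin n → Fin m → (Matrix (Fin (m+1)) (Fin (m+1)) F) →ₗ[F] F := fun i a =>
    { toFun := fun M => ∑ x, ∑ y, B i a.castSucc x ^ q * M x y * B i a.castSucc y
      map_add' := by
        intro M N
        simp [mul_add, add_mul, Finset.sum_add_distrib]
      map_smul' := by
        intro c M
        simp only [Matrix.smul_apply, smul_eq_mul, RingHom.id_apply, Finset.mul_sum]
        refine Finset.sum_congr rfl fun x _ => Finset.sum_congr rfl fun y _ => by ring }
  have hLP : ∀ i j a b, L i a (P j b) =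
      (hermInner q (B i a.castSucc) (B j b.castSucc)) ^ (q + 1) := by
    intro i j a b
    rw [pow_succ, ← hherm, mul_comm]
    simp only [L, P, hermInner, LinearMap.coe_mk, AddHom.coe_mk, Matrix.of_apply,
      Finset.sum_mul_sum]
    refine Finset.sum_congr rfl fun x _ => Finset.sum_congr rfl fun y _ => by ring
  have key := aux_indep n m hdF P (1 : Matrix (Fin (m+1)) (Fin (m+1)) F)
    (Matrix.traceLinearMap _ F F) L (by simp) (by
      intro i a
      have := hON i a.castSucc a.castSucc
      simp only [hermInner, if_true] at this
      simp only [Matrix.traceLinearMap_apply, Matrix.trace, Matrix.diag, P, Matrix.of_apply]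
      rw [← this]
      exact Finset.sum_congr rfl fun x _ => mul_comm _ _) (by
      intro i a
      have := hON i a.castSucc a.castSucc
      simp only [hermInner, if_true] at this
      simp only [L, LinearMap.coe_mk, AddHom.coe_mk]
      rw [← this]
      refine Finset.sum_congr rfl fun x _ => ?_
      rw [Finset.sum_eq_single x]
      · simp
      · intro y _ hy
        simp [Matrix.one_apply_ne hy.symm]
      · simp) (by
      intro i a b
      rw [hLP, hON]
      by_cases h : a = b <;> simp [h]) (by
      intro i j a b hij
      rw [hLP, hMUB i j hij])
  have hc := key.fintype_card_le_finrank
  simp [Module.finrank_matrix] at hc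
  have : n * m ≤ (m + 2) * m := by nlinarith
  have := Nat.le_of_mul_le_mul_right this (by omega)
  omega
end

section
/- Let l be an odd prime, k a positive integer, p a prime different from l, and r ≥ 1 such that q = p^r satisfies q ≡ −1 (mod l^k). Then M_{l^k}(𝔽_{q²}) = l^k + 1; that is, there exists a set of l^k + 1 pairwise mutually unbiased orthonormal bases of 𝔽_{q²}^{l^k}, and no set of l^k + 2 such bases exists. -/
open Finset

theorem mub_pow_sum {F ι : Type*} [Field F] [Fintype ι] (p r q : ℕ) [Fact p.Prime] [CharP F p]
    (hq : q = p ^ r) (f : ι → F) : (∑ i, f i) ^ q = ∑ i, f i ^ q := by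
  subst hq
  exact sum_pow_char_pow p r univ f

theorem mub_conj {F : Type*} [Field F] [Fintype F] (p r q : ℕ) [Fact p.Prime] [CharP F p]
    (hq : q = p ^ r) (hF : Fintype.card F = q ^ 2) {d : ℕ} (u v : Fin d → F) :
    hermInner q v u = (hermInner q u v) ^ q := by
  unfold hermInner
  rw [mub_pow_sum p r q hq]
  refine Finset.sum_congr rfl fun j _ => ?_
  rw [mul_pow, ← pow_mul, ← pow_two, ← hF, FiniteField.pow_card, mul_comm]

theorem mub_upper {F : Type*} [Field F] [Fintype F] (p r q : ℕ) [Fact p.Prime] [CharP F p]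
    (hq : q = p ^ r) (hF : Fintype.card F = q ^ 2) {d : ℕ} (hd : 3 ≤ d)
    (B : Fin (d + 2) → Fin d → Fin d → F)
    (h1 : ∀ i, IsON q (B i)) (h2 : ∀ i j, i ≠ j → IsMUB q (B i) (B j)) : False := by
  let T : (Fin (d+2) × Fin d → F) →ₗ[F] ((Fin d × Fin d → F) × (Fin (d+2) → F)) :=
    { toFun := fun c => (fun xy => ∑ s, c s * (B s.1 s.2 xy.1 * B s.1 s.2 xy.2 ^ q),
        fun b => ∑ i, c (b, i))
      map_add' := by
        intro c c'
        ext <;> simp [add_mul, Finset.sum_add_distrib]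
      map_smul' := by
        intro a c
        ext <;> simp [Finset.mul_sum, mul_assoc] }
  have hinj : Function.Injective T := by
    rw [← LinearMap.ker_eq_bot, LinearMap.ker_eq_bot']
    intro c hc
    have hM : ∀ x y, ∑ s : Fin (d+2) × Fin d, c s * (B s.1 s.2 x * B s.1 s.2 y ^ q) = 0 :=
      fun x y => congrFun (congrArg Prod.fst hc) (x, y)
    have hS : ∀ b, ∑ i, c (b, i) = 0 := fun b => congrFun (congrArg Prod.snd hc) b
    ext ⟨b', j⟩
    have key : ∑ s : Fin (d+2) × Fin d, c s * (hermInner q (B b' j) (B s.1 s.2)) ^ (q+1) = 0 := by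
      have : ∀ s : Fin (d+2) × Fin d, c s * (hermInner q (B b' j) (B s.1 s.2)) ^ (q+1)
          = ∑ x, ∑ y, (B b' j x) ^ q * B b' j y * (c s * (B s.1 s.2 x * B s.1 s.2 y ^ q)) := by
        intro s
        rw [pow_succ, ← mub_conj p r q hq hF, mul_comm (hermInner _ _ _)]
        unfold hermInner
        rw [Finset.sum_mul_sum, Finset.mul_sum]
        refine Finset.sum_congr rfl fun x _ => ?_
        rw [Finset.mul_sum]
        refine Finset.sum_congr rfl fun y _ => ?_
        ring
      simp_rw [this]
      rw [Finset.sum_comm]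
      refine Finset.sum_eq_zero fun x _ => ?_
      rw [Finset.sum_comm]
      refine Finset.sum_eq_zero fun y _ => ?_
      rw [← Finset.mul_sum, hM, mul_zero]
    rw [Fintype.sum_prod_type, Finset.sum_eq_single b'] at key
    · rw [Finset.sum_eq_single j] at key
      · simpa [h1 b' j j] using key
      · intro i _ hi
        simp [h1 b' j i, hi.symm]
      · simp
    · intro b _ hb
      have : ∀ i, hermInner q (B b' j) (B b i) ^ (q+1) = (d:F)⁻¹ := fun i => h2 b' b hb.symm j i
      simp only [this]
      rw [← Finset.sum_mul, hS, zero_mul]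
    · simp
  have := LinearMap.finrank_le_finrank_of_injective hinj
  simp at this
  nlinarith

theorem mub_norm {F : Type*} [Field F] [Fintype F] (q : ℕ) (hq : 2 ≤ q)
    (hF : Fintype.card F = q ^ 2) (a : F) (ha : a ≠ 0) (haq : a ^ q = a) :
    ∃ s : F, s ^ (q + 1) = a := by
  classical
  obtain ⟨g, hg⟩ := IsCyclic.exists_generator (α := Fˣ)
  obtain ⟨m, hm⟩ := (mem_powers_iff_mem_zpowers.2 (hg (Units.mk0 a ha)) : _)
  have hm' : g ^ m = Units.mk0 a ha := hm
  have hord : orderOf g = (q - 1) * (q + 1) := by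
    rw [orderOf_eq_card_of_forall_mem_zpowers hg, Nat.card_eq_fintype_card, Fintype.card_units, hF]
    obtain ⟨t, rfl⟩ : ∃ t, q = t + 1 := ⟨q - 1, by omega⟩
    simp only [Nat.add_sub_cancel]
    have : (t+1)^2 = t * (t+1+1) + 1 := by ring
    omega
  have h1 : (Units.mk0 a ha) ^ (q - 1) = 1 := by
    have : (Units.mk0 a ha) ^ (q - 1) * Units.mk0 a ha = 1 * Units.mk0 a ha := by
      rw [← pow_succ, Nat.sub_add_cancel (by omega), one_mul]
      ext; simpa using haq
    exact mul_right_cancel this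
  rw [← hm', ← pow_mul, ← orderOf_dvd_iff_pow_eq_one, hord, mul_comm m] at h1
  obtain ⟨n, hn⟩ := Nat.dvd_of_mul_dvd_mul_left (by omega) h1
  refine ⟨((g ^ n : Fˣ) : F), ?_⟩
  have := congrArg (Units.val) hm'
  rw [hn, mul_comm, pow_mul] at this
  simpa using this

theorem mub_gauss {F E : Type*} [Field F] [Field E] [Fintype E] [DecidableEq E]
    (p r q : ℕ) [Fact p.Prime] [CharP F p]
    (hq : q = p ^ r) (ψ : AddChar E F) (hψ : ψ.IsPrimitive) (hc : ∀ x, ψ x ^ q = ψ (-x))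
    (h2 : (2 : E) ≠ 0) (a b : E) (ha : a ≠ 0) :
    (∑ x, ψ (a * x ^ 2 + b * x)) ^ (q + 1) = (Fintype.card E : F) := by
  rw [pow_succ', mub_pow_sum p r q hq, Finset.sum_mul_sum, Finset.sum_comm]
  have h : ∀ y : E, ∑ x, ψ (a * x ^ 2 + b * x) * ψ (a * y ^ 2 + b * y) ^ q
      = ∑ t, ψ (a * t ^ 2 + b * t) * ψ (y * (2 * a * t)) := by
    intro y
    rw [← Equiv.sum_comp (Equiv.addRight y)]
    refine Finset.sum_congr rfl fun t _ => ?_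
    rw [hc, ← AddChar.map_add_eq_mul, ← AddChar.map_add_eq_mul]
    congr 1
    simp only [Equiv.coe_addRight]
    ring
  simp_rw [h]
  rw [Finset.sum_comm]
  simp_rw [← Finset.mul_sum, AddChar.sum_mulShift _ hψ]
  rw [Finset.sum_eq_single 0]
  · simp
  · intro t _ ht
    simp [h2, ha, ht]
  · simp

theorem mub_char (l k : ℕ) [Fact l.Prime] (q : ℕ) {F : Type} [Field F] [Fintype F]
    (hk : k ≠ 0) (hq : 1 ≤ q) (hcong : l ∣ q + 1) (hF : Fintype.card F = q ^ 2) :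
    ∃ ψ : AddChar (GaloisField l k) F, ψ.IsPrimitive ∧ ∀ x, ψ x ^ q = ψ (-x) := by
  classical
  have hdvd : l ∣ Fintype.card Fˣ := by
    rw [Fintype.card_units, hF]
    obtain ⟨t, rfl⟩ : ∃ t, q = t + 1 := ⟨q - 1, by omega⟩
    have : (t+1)^2 - 1 = (t+1+1) * t := by
      have : (t+1)^2 = t * (t+1+1) + 1 := by ring
      rw [this, Nat.add_sub_cancel, mul_comm]
    rw [this]
    exact hcong.mul_right _
  obtain ⟨z, hz⟩ := exists_prime_orderOf_dvd_card l hdvd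
  have hz1 : (z : F) ^ l = 1 := by
    have := pow_orderOf_eq_one z
    rw [hz] at this
    simpa using congrArg Units.val this
  have hzp : IsPrimitiveRoot (z : F) l := by
    rw [IsPrimitiveRoot.coe_units_iff, ← hz]; exact IsPrimitiveRoot.orderOf z
  let χ : AddChar (ZMod l) F := AddChar.zmodChar l hz1
  let ψ : AddChar (GaloisField l k) F :=
    χ.compAddMonoidHom (Algebra.trace (ZMod l) (GaloisField l k)).toAddMonoidHom
  have hψ1 : ψ ≠ 1 := by
    obtain ⟨x, hx⟩ := Algebra.trace_surjective (ZMod l) (GaloisField l k) 1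
    intro h
    have h' : ψ x = 1 := by rw [h]; simp
    have h'' : χ 1 = 1 := by rw [← hx]; exact h'
    rw [AddChar.zmodChar_apply, ZMod.val_one, pow_one] at h''
    exact hzp.ne_one (Fact.out : l.Prime).one_lt h''
  refine ⟨ψ, AddChar.IsPrimitive.of_ne_one hψ1, fun x => ?_⟩
  have hx : ψ x ^ (q+1) = 1 := by
    rw [← AddChar.map_nsmul_eq_pow]
    obtain ⟨m, hm⟩ := hcong
    have : (q+1) • x = 0 := by
      rw [nsmul_eq_mul, hm]
      simp
    rw [this, AddChar.map_zero_eq_one]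
  rw [AddChar.map_neg_eq_inv]
  rw [pow_succ] at hx
  exact eq_inv_of_mul_eq_one_left hx

theorem mub_lower {F E : Type*} [Field F] [Field E] [Fintype E] [DecidableEq E]
    (p r q : ℕ) [Fact p.Prime] [CharP F p]
    (hq : q = p ^ r) (ψ : AddChar E F) (hψ : ψ.IsPrimitive) (hc : ∀ x, ψ x ^ q = ψ (-x))
    (h2 : (2 : E) ≠ 0) (s : F) (hd0 : (Fintype.card E : F) ≠ 0)
    (hdq : (Fintype.card E : F) ^ q = (Fintype.card E : F))
    (hs : s ^ (q + 1) = (Fintype.card E : F)⁻¹) :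
    ∃ B : Option E → E → E → F,
      (∀ i a b, ∑ x, B i a x ^ q * B i b x = if a = b then 1 else 0) ∧
      ∀ i j, i ≠ j → ∀ a b, (∑ x, B i a x ^ q * B j b x) ^ (q + 1) = (Fintype.card E : F)⁻¹ := by
  have hq0 : q ≠ 0 := by rw [hq]; exact pow_ne_zero _ (Fact.out : p.Prime).ne_zero
  have hψ1 : ∀ x, ψ x ^ (q + 1) = 1 := by
    intro x
    rw [pow_succ, hc, ← AddChar.map_add_eq_mul]; simp
  have hin : ∀ a b a' b' : E, ∑ x, (s * ψ (a * x ^ 2 + b * x)) ^ q * (s * ψ (a' * x ^ 2 + b' * x))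
      = (Fintype.card E : F)⁻¹ * ∑ x, ψ ((a' - a) * x ^ 2 + (b' - b) * x) := by
    intro a b a' b'
    rw [← hs, Finset.mul_sum]
    refine Finset.sum_congr rfl fun x _ => ?_
    have : (a' - a) * x ^ 2 + (b' - b) * x = -(a * x ^ 2 + b * x) + (a' * x ^ 2 + b' * x) := by ring
    rw [this, AddChar.map_add_eq_mul ψ (-(a * x ^ 2 + b * x)), ← hc, mul_pow]
    ring
  refine ⟨fun i => match i with
    | none => fun a x => if a = x then 1 else 0
    | some a => fun b x => s * ψ (a * x ^ 2 + b * x), ?_, ?_⟩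
  · rintro (_ | i) a b
    · simp [ite_pow, hq0, eq_comm]
    · simp only [hin]
      have := AddChar.sum_mulShift (b - a) hψ
      simp only [sub_self, zero_mul, zero_add, mul_comm (b - a), this, sub_eq_zero]
      by_cases h : a = b
      · simp [h, hd0]
      · simp [h, Ne.symm h]
  · rintro (_ | i) (_ | j) hij a b
    · exact absurd rfl hij
    · simp [ite_pow, hq0, mul_pow, hs, hψ1]
    · have h : ∑ x, (s * ψ (i * x ^ 2 + a * x)) ^ q * (if b = x then 1 else 0)
          = (s * ψ (i * b ^ 2 + a * b)) ^ q := by simp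
      simp only [h]
      rw [← pow_mul, mul_comm q, pow_mul, mul_pow, hψ1, mul_one, hs, inv_pow, hdq]
    · simp only [hin]
      rw [mul_pow, mub_gauss p r q hq ψ hψ hc h2]
      · rw [pow_succ, inv_pow, hdq, mul_assoc, inv_mul_cancel₀ hd0, mul_one]
      · intro h
        exact hij (by rw [sub_eq_zero.1 h])

/-- Let `l` be an odd prime, `k ≥ 1`, `p` a prime different from `l` and
`q = p^r ≡ −1 (mod l^k)`.  Then `M_{l^k}(𝔽_{q²}) = l^k + 1`: there exist `l^k + 1` pairwise
mutually unbiased orthonormal bases of `𝔽_{q²}^{l^k}`, and no `l^k + 2` such bases exist. -/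
theorem stmt4 (l k p r : ℕ) (hl : l.Prime) (hlodd : Odd l) (hk : 1 ≤ k)
    (hp : p.Prime) (hpl : p ≠ l) (hr : 1 ≤ r) (q : ℕ) (hq : q = p ^ r)
    (hcong : l ^ k ∣ q + 1)
    (F : Type) [Field F] [Fintype F] (hF : Fintype.card F = q ^ 2) :
    (∃ B : Fin (l ^ k + 1) → Fin (l ^ k) → Fin (l ^ k) → F,
        (∀ i, IsON q (B i)) ∧ ∀ i j, i ≠ j → IsMUB q (B i) (B j))
    ∧ ¬ ∃ B : Fin (l ^ k + 2) → Fin (l ^ k) → Fin (l ^ k) → F,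
        (∀ i, IsON q (B i)) ∧ ∀ i j, i ≠ j → IsMUB q (B i) (B j) := by
  have : Fact p.Prime := ⟨hp⟩
  have : Fact l.Prime := ⟨hl⟩
  have hcard : Fintype.card F = p ^ (r * 2) := by rw [hF, hq, pow_mul]
  have : CharP F p := charP_of_card_eq_prime_pow hcard
  have hq2 : 2 ≤ q := by
    rw [hq]; exact hp.two_le.trans (Nat.le_self_pow (by omega) p)
  have hl3 : 3 ≤ l := by
    have := hl.two_le
    rcases hlodd with ⟨m, hm⟩
    omega
  constructor
  · classical
    have : Fintype (GaloisField l k) := Fintype.ofFinite _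
    have hE : Fintype.card (GaloisField l k) = l ^ k := by
      rw [← Nat.card_eq_fintype_card, GaloisField.card l k (by omega)]
    obtain ⟨ψ, hψ, hc⟩ := mub_char l k q (F := F) (by omega) (by omega)
      ((dvd_pow_self l (by omega)).trans hcong) hF
    have hd0 : ((l ^ k : ℕ) : F) ≠ 0 := by
      rw [Ne, CharP.cast_eq_zero_iff F p]
      intro h
      exact hpl ((Nat.prime_dvd_prime_iff_eq hp hl).1 (hp.dvd_of_dvd_pow h))
    have hdq : ((l ^ k : ℕ) : F) ^ q = ((l ^ k : ℕ) : F) := by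
      rw [hq, ← iterateFrobenius_def, map_natCast]
    obtain ⟨s, hs⟩ := mub_norm q hq2 hF (((l ^ k : ℕ) : F)⁻¹) (inv_ne_zero hd0)
      (by rw [inv_pow, hdq])
    have h2 : (2 : GaloisField l k) ≠ 0 := by
      have : ((2 : ℕ) : GaloisField l k) ≠ 0 := by
        rw [Ne, CharP.cast_eq_zero_iff _ l]
        intro h
        have := Nat.le_of_dvd (by norm_num) h
        omega
      exact_mod_cast this
    obtain ⟨B, hB1, hB2⟩ := mub_lower p r q hq ψ hψ hc h2 s (by rw [hE]; exact hd0)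
      (by rw [hE]; exact hdq) (by rw [hE]; exact hs)
    let e : Fin (l ^ k) ≃ GaloisField l k := (Fintype.equivFinOfCardEq hE).symm
    let o : Fin (l ^ k + 1) ≃ Option (GaloisField l k) :=
      (finSuccEquiv (l ^ k)).trans e.optionCongr
    refine ⟨fun i a x => B (o i) (e a) (e x), ?_, ?_⟩
    · intro i a b
      have := hB1 (o i) (e a) (e b)
      rw [← Equiv.sum_comp e] at this
      simpa [hermInner] using this
    · intro i j hij a b
      have := hB2 (o i) (o j) (fun h => hij (o.injective h)) (e a) (e b)
      rw [← Equiv.sum_comp e, hE] at this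
      exact this
  · rintro ⟨B, h1, h2⟩
    exact mub_upper p r q hq hF (hl3.trans (Nat.le_self_pow (by omega) l)) B h1 h2
end

section
/- Let k be a positive integer, p an odd prime, and r ≥ 1 such that q = p^r satisfies q ≡ 3 (mod 4). Then M_{2^k}(𝔽_{q²}) = 2^k + 1; that is, there exists a set of 2^k + 1 pairwise mutually unbiased orthonormal bases of 𝔽_{q²}^{2^k}, and no set of 2^k + 2 such bases exists. -/
open Finset

namespace Stmt5Aux

/-- lift of bits to `ZMod 4` -/
def lam (z : ZMod 2) : ZMod 4 := (z.val : ZMod 4)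

lemma lam_zero : lam 0 = 0 := by decide
lemma lam_add : ∀ a b, lam (a + b) = lam a + lam b + 2 * (lam a * lam b) := by decide
lemma lam_mul : ∀ a b, lam (a * b) = lam a * lam b := by decide
lemma two_lam_add (a b : ZMod 2) : 2 * lam (a + b) = 2 * lam a + 2 * lam b := by
  revert a b; decide

lemma two_lam_sum {ι : Type*} (s : Finset ι) (g : ι → ZMod 2) :
    2 * lam (∑ i ∈ s, g i) = ∑ i ∈ s, 2 * lam (g i) := by
  classical
  induction s using Finset.induction_on with
  | empty => simp [lam_zero]
  | insert a s ha ih => rw [Finset.sum_insert ha, Finset.sum_insert ha, two_lam_add, ih]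

lemma four_zero : (4 : ZMod 4) = 0 := by decide

/-- the quadratic refinement -/
lemma quad {n : ℕ} (A : Fin n → Fin n → ZMod 2) (hA : ∀ i j, A i j = A j i)
    (x y : Fin n → ZMod 2) :
    ∑ i, ∑ j, lam (A i j) * lam (x i + y i) * lam (x j + y j) =
      ∑ i, ∑ j, lam (A i j) * lam (x i) * lam (x j)
      + ∑ i, ∑ j, lam (A i j) * lam (y i) * lam (y j)
      + 2 * lam (∑ i, ∑ j, A i j * x i * y j) := by
  have h1 : 2 * lam (∑ i, ∑ j, A i j * x i * y j)
      = ∑ i, ∑ j, 2 * (lam (A i j) * lam (x i) * lam (y j)) := by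
    rw [two_lam_sum]
    refine Finset.sum_congr rfl fun i _ => ?_
    rw [two_lam_sum]
    refine Finset.sum_congr rfl fun j _ => ?_
    rw [lam_mul, lam_mul]
  have h2 : ∑ i, ∑ j, lam (A i j) * lam (y i) * lam (x j)
      = ∑ i, ∑ j, lam (A i j) * lam (x i) * lam (y j) := by
    rw [Finset.sum_comm]
    refine Finset.sum_congr rfl fun i _ => Finset.sum_congr rfl fun j _ => ?_
    rw [hA j i]; ring
  have h3 : ∑ i, ∑ j, lam (A i j) * (lam (x i) + lam (y i)) * (lam (x j) * lam (y j))
      = ∑ i, ∑ j, lam (A i j) * (lam (x i) * lam (y i)) * (lam (x j) + lam (y j)) := by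
    rw [Finset.sum_comm]
    refine Finset.sum_congr rfl fun i _ => Finset.sum_congr rfl fun j _ => ?_
    rw [hA j i]; ring
  have h4 : ∀ i j, lam (A i j) * lam (x i + y i) * lam (x j + y j) =
      lam (A i j) * lam (x i) * lam (x j) + lam (A i j) * lam (y i) * lam (y j)
      + lam (A i j) * lam (x i) * lam (y j) + lam (A i j) * lam (y i) * lam (x j)
      + 2 * (lam (A i j) * (lam (x i) + lam (y i)) * (lam (x j) * lam (y j)))
      + 2 * (lam (A i j) * (lam (x i) * lam (y i)) * (lam (x j) + lam (y j))) := by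
    intro i j
    rw [lam_add, lam_add]
    linear_combination (lam (A i j) * (lam (x i) * lam (y i)) * (lam (x j) * lam (y j))) * four_zero
  rw [h1]
  simp only [h4, Finset.sum_add_distrib, ← Finset.mul_sum]
  rw [h2, h3]
  linear_combination (∑ i, ∑ j, lam (A i j) * (lam (x i) * lam (y i)) * (lam (x j) + lam (y j)))
    * four_zero

lemma exists_f (L : Type) [Field L] [Fintype L] [Algebra (ZMod 2) L] (F : Type) [Field F]
    (I : F) (hI : I ^ 2 = -1) (h2 : (-1 : F) ≠ 1) :
    ∃ (ψ : AddChar L F) (f : L → F), ψ ≠ 1 ∧ (∀ x, ψ x = 1 ∨ ψ x = -1) ∧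
      (∀ x y, f (x + y) = f x * f y * ψ (x * y)) ∧ ∀ x, ∃ n : ℕ, f x = I ^ n := by
  have hI4 : I ^ 4 = 1 := by
    rw [show 4 = 2 * 2 from rfl, pow_mul, hI]; ring
  have : FiniteDimensional (ZMod 2) L := Module.Finite.of_finite
  let τ : AddChar (ZMod 4) F := AddChar.zmodChar 4 hI4
  have hτ : ∀ a, τ a = I ^ a.val := fun a => AddChar.zmodChar_apply hI4 a
  let tr := Algebra.trace (ZMod 2) L
  let ψ : AddChar L F :=
    { toFun := fun x => τ (2 * lam (tr x))
      map_zero_eq_one' := by simp [lam_zero]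
      map_add_eq_mul' := fun a b => by
        rw [map_add, two_lam_add, AddChar.map_add_eq_mul] }
  have hψ : ∀ x, ψ x = τ (2 * lam (tr x)) := fun x => rfl
  let b := Module.finBasis (ZMod 2) L
  let A : Fin _ → Fin _ → ZMod 2 := fun i j => tr (b i * b j)
  refine ⟨ψ, fun x => τ (∑ i, ∑ j, lam (A i j) * lam (b.repr x i) * lam (b.repr x j)),
    ?_, ?_, ?_, ?_⟩
  · intro h
    obtain ⟨x, hx⟩ := Algebra.trace_surjective (ZMod 2) L 1
    have h3 : ψ x = 1 := by rw [h]; rfl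
    rw [hψ] at h3
    have : tr x = 1 := hx
    rw [this, hτ, show (2 * lam 1 : ZMod 4).val = 2 by decide, hI] at h3
    exact h2 h3
  · intro x
    rw [hψ]
    generalize tr x = z
    have : (2 * lam z : ZMod 4).val = 0 ∨ (2 * lam z : ZMod 4).val = 2 := by
      revert z; decide
    rw [hτ]
    rcases this with h | h <;> rw [h]
    · left; simp
    · right; exact hI
  · intro x y
    have hA : ∀ i j, A i j = A j i := fun i j => by simp only [A, mul_comm]
    have key : tr (x * y) = ∑ i, ∑ j, A i j * b.repr x i * b.repr y j := by
      conv_lhs => rw [← b.sum_repr x, ← b.sum_repr y]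
      rw [Finset.sum_mul_sum, map_sum]
      refine Finset.sum_congr rfl fun i _ => ?_
      rw [map_sum]
      refine Finset.sum_congr rfl fun j _ => ?_
      rw [smul_mul_smul_comm, map_smul]
      simp only [A, smul_eq_mul]
      ring
    rw [hψ, key, ← AddChar.map_add_eq_mul, ← AddChar.map_add_eq_mul]
    congr 1
    rw [← quad A hA]
    simp
  · intro x
    exact ⟨_, hτ _⟩

lemma gauss {L F : Type} [Field L] [Fintype L] [CharP L 2] [Field F]
    (σ : F →+* F) (ψ : AddChar L F) (hψ : ψ ≠ 1) (h : L → F) (c : L) (hc : c ≠ 0)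
    (hh : ∀ x t, h (x + t) = h x * h t * ψ (x * (c * t))) (hσ : ∀ x, σ (h x) * h x = 1) :
    σ (∑ x, h x) * ∑ x, h x = (Fintype.card L : F) := by
  classical
  have h0 : h 0 = 1 := by
    have h1 := hh 0 0
    simp only [add_zero, zero_mul, AddChar.map_zero_eq_one, mul_one] at h1
    have h2 : h 0 ≠ 0 := by
      intro h0
      have := hσ 0
      simp [h0] at this
    exact mul_left_cancel₀ h2 (by rw [← h1, mul_one])
  rw [map_sum, Finset.sum_mul]
  have h1 : ∀ x, σ (h x) * ∑ y, h y = ∑ t, h t * ψ (x * (c * t)) := by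
    intro x
    rw [← Equiv.sum_comp (Equiv.addLeft x) h, Finset.mul_sum]
    refine Finset.sum_congr rfl fun t _ => ?_
    rw [Equiv.coe_addLeft, hh]
    linear_combination (h t * ψ (x * (c * t))) * hσ x
  simp only [h1]
  rw [Finset.sum_comm]
  simp only [← Finset.mul_sum]
  simp only [AddChar.sum_mulShift _ (AddChar.IsPrimitive.of_ne_one hψ)]
  rw [Finset.sum_eq_single 0]
  · simp [h0]
  · intro t _ ht
    simp [hc, ht]
  · simp

lemma upper {F : Type} [Field F] (q d : ℕ) (hd : 1 < d) (hdF : (d : F) ≠ 0)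
    (σ : F →+* F) (hσ : ∀ x, σ x = x ^ q) (hσσ : ∀ x, σ (σ x) = x) :
    ¬ ∃ B : Fin (d + 2) → Fin d → Fin d → F,
        (∀ i, IsON q (B i)) ∧ ∀ i j, i ≠ j → IsMUB q (B i) (B j) := by
  classical
  rintro ⟨B, hON, hMUB⟩
  have hsymm : ∀ u v : Fin d → F, hermInner q u v = σ (hermInner q v u) := by
    intro u v
    simp only [hermInner, ← hσ, map_sum, map_mul, hσσ]
    exact Finset.sum_congr rfl fun _ _ => mul_comm _ _
  let z : Fin d := ⟨0, by omega⟩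
  let Φ : (Fin (d + 2) × Fin d → F) →ₗ[F] (Fin d × Fin d → F) × (Fin (d + 1) → F) :=
    LinearMap.prod
      (LinearMap.pi fun xy => ∑ bi : Fin (d + 2) × Fin d,
        (B bi.1 bi.2 xy.1 * σ (B bi.1 bi.2 xy.2)) • LinearMap.proj bi)
      (LinearMap.pi fun b => LinearMap.proj (b.succ, z))
  have hker : LinearMap.ker Φ ≠ ⊥ := by
    apply LinearMap.ker_ne_bot_of_finrank_lt
    rw [Module.finrank_prod]
    simp only [Module.finrank_fintype_fun_eq_card, Fintype.card_prod, Fintype.card_fin]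
    nlinarith
  obtain ⟨c, hc, hc0⟩ := (Submodule.ne_bot_iff _).1 hker
  rw [LinearMap.mem_ker, Prod.ext_iff] at hc
  obtain ⟨hc1, hc2⟩ := hc
  have e1 : ∀ x y, ∑ bi : Fin (d + 2) × Fin d,
      (B bi.1 bi.2 x * σ (B bi.1 bi.2 y)) * c bi = 0 := by
    intro x y
    have := congrFun hc1 (x, y)
    simpa [Φ] using this
  have e2 : ∀ b : Fin (d + 1), c (b.succ, z) = 0 := by
    intro b
    have := congrFun hc2 b
    simpa [Φ] using this
  have e3 : ∀ v : Fin d → F, ∑ bi : Fin (d + 2) × Fin d,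
      c bi * (hermInner q v (B bi.1 bi.2) * hermInner q (B bi.1 bi.2) v) = 0 := by
    intro v
    have : ∑ x, ∑ y, (σ (v x) * v y) * ∑ bi : Fin (d + 2) × Fin d,
      (B bi.1 bi.2 x * σ (B bi.1 bi.2 y)) * c bi = 0 := by simp [e1]
    rw [← this]
    simp only [hermInner, ← hσ, Finset.sum_mul_sum]
    simp only [Finset.mul_sum]
    rw [Finset.sum_comm]
    refine Finset.sum_congr rfl fun x _ => ?_
    rw [Finset.sum_comm]
    refine Finset.sum_congr rfl fun y _ => Finset.sum_congr rfl fun bi _ => ?_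
    ring
  have e4 : ∀ b i, c (b, i) + ∑ b' ∈ Finset.univ.erase b, ∑ j, c (b', j) * (d : F)⁻¹ = 0 := by
    intro b i
    rw [← e3 (B b i), Fintype.sum_prod_type, ← Finset.add_sum_erase _ _ (Finset.mem_univ b)]
    congr 1
    · simp only [hON b _ _]
      rw [Finset.sum_eq_single i]
      · simp
      · intro j _ hj
        simp [hj]
      · simp
    · refine Finset.sum_congr rfl fun b' hb' => Finset.sum_congr rfl fun j _ => ?_
      have := hMUB b' b (Finset.ne_of_mem_erase hb') j i
      rw [hsymm (B b i), hσ, ← pow_succ]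
      rw [this]
  have e5 : ∀ b i, c (b, i) = c (b, z) := by
    intro b i
    have h1 := e4 b i
    have h2 := e4 b z
    linear_combination h1 - h2
  have e6 : ∀ b : Fin (d + 1), ∀ i, c (b.succ, i) = 0 := fun b i => by rw [e5, e2]
  have e7 : ∀ i, c (0, i) = 0 := by
    intro i
    have h1 := e4 0 i
    rw [Finset.sum_eq_zero, add_zero] at h1
    · exact h1
    · intro b hb
      obtain ⟨b', rfl⟩ := Fin.exists_succ_eq.2 (Finset.ne_of_mem_erase hb)
      simp [e6]
  apply hc0
  funext ⟨b, i⟩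
  refine Fin.cases ?_ (fun b => ?_) b
  · exact e7 i
  · exact e6 b i

lemma lower {F L : Type} [Field F] [Field L] [Fintype L] [CharP L 2] (q d : ℕ)
    (hdF : (d : F) ≠ 0) (e : Fin d ≃ L)
    (σ : F →+* F) (hσ : ∀ x, σ x = x ^ q) (hσσ : ∀ x, σ (σ x) = x)
    (α : F) (hα : σ α * α = (d : F)⁻¹) (ψ : AddChar L F) (f : L → F) (hψ : ψ ≠ 1)
    (hψ1 : ∀ x, ψ x = 1 ∨ ψ x = -1)
    (hf : ∀ x y, f (x + y) = f x * f y * ψ (x * y)) (hf1 : ∀ x, σ (f x) * f x = 1) :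
    ∃ B : Fin (d + 1) → Fin d → Fin d → F,
        (∀ i, IsON q (B i)) ∧ ∀ i j, i ≠ j → IsMUB q (B i) (B j) := by
  classical
  have hcard : Fintype.card L = d := by simpa using (Fintype.card_congr e).symm
  have hσψ : ∀ x, σ (ψ x) = ψ x := by
    intro x
    rcases hψ1 x with h | h <;> simp [h]
  have hψψ : ∀ x, ψ x * ψ x = 1 := by
    intro x
    rcases hψ1 x with h | h <;> simp [h]
  have hq0 : (0 : F) ^ q = 0 := by rw [← hσ]; simp
  have hN : ∀ x : F, x ^ (q + 1) = σ x * x := fun x => by rw [hσ, pow_succ]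
  let V : L → L → L → F := fun a b x => α * f (a * x) * ψ (b * x)
  have hV : ∀ a b x, σ (V a b x) * V a b x = (d : F)⁻¹ := by
    intro a b x
    simp only [V, map_mul, hσψ]
    linear_combination (σ (f (a * x)) * f (a * x)) * hα * (ψ (b * x) * ψ (b * x))
      + (d : F)⁻¹ * hf1 (a * x) * (ψ (b * x) * ψ (b * x)) + (d : F)⁻¹ * hψψ (b * x)
  have hin : ∀ a b a' b', ∑ x, σ (V a b x) * V a' b' x =
      (d : F)⁻¹ * ∑ x, σ (f (a * x)) * f (a' * x) * ψ ((b + b') * x) := by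
    intro a b a' b'
    rw [Finset.mul_sum]
    refine Finset.sum_congr rfl fun x _ => ?_
    simp only [V, map_mul, hσψ]
    rw [add_mul, AddChar.map_add_eq_mul]
    linear_combination (σ (f (a * x)) * f (a' * x) * (ψ (b * x) * ψ (b' * x))) * hα
  let B : Fin (d + 1) → Fin d → Fin d → F :=
    Fin.cons (fun i j => if i = j then 1 else 0) (fun a b x => V (e a) (e b) (e x))
  have hB0 : ∀ i j, B 0 i j = if i = j then 1 else 0 := fun i j => rfl
  have hBs : ∀ a b x, B (Fin.succ a) b x = V (e a) (e b) (e x) := fun a b x => rfl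
  have hBB : ∀ a b a' b', hermInner q (B (Fin.succ a) b) (B (Fin.succ a') b') =
      (d : F)⁻¹ * ∑ x, σ (f (e a * x)) * f (e a' * x) * ψ ((e b + e b') * x) := by
    intro a b a' b'
    rw [← hin]
    simp only [hermInner, hBs, ← hσ]
    exact Equiv.sum_comp e (fun x => σ (V (e a) (e b) x) * V (e a') (e b') x)
  refine ⟨B, ?_, ?_⟩
  · intro i
    refine Fin.cases ?_ (fun a => ?_) i
    · intro i j
      simp only [hermInner, hB0]
      rw [Finset.sum_eq_single i]
      · simp [eq_comm]
      · intro x _ hx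
        simp [hx.symm, hq0]
      · simp
    · intro b b'
      rw [hBB]
      simp only [hf1, one_mul]
      simp only [mul_comm (e b + e b')]
      rw [AddChar.sum_mulShift _ (AddChar.IsPrimitive.of_ne_one hψ)]
      have : e b + e b' = 0 ↔ b = b' := by
        rw [CharTwo.add_eq_zero, e.injective.eq_iff]
      simp only [this, hcard]
      split_ifs with h
      · exact inv_mul_cancel₀ hdF
      · simp
  · intro i j
    refine Fin.cases ?_ (fun a => ?_) i <;> refine Fin.cases ?_ (fun a' => ?_) j
    · intro h; exact absurd rfl h
    · intro _ x y
      have : hermInner q (B 0 x) (B a'.succ y) = V (e a') (e y) (e x) := by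
        simp only [hermInner, hB0, hBs]
        rw [Finset.sum_eq_single x]
        · simp
        · intro z _ hz
          simp [hz.symm, hq0]
        · simp
      rw [this, hN, hV]
    · intro _ x y
      have : hermInner q (B a.succ x) (B 0 y) = σ (V (e a) (e x) (e y)) := by
        simp only [hermInner, hB0, hBs]
        rw [Finset.sum_eq_single y]
        · simp [hσ]
        · intro z _ hz
          simp [hz.symm]
        · simp
      rw [this, hN, hσσ, mul_comm, hV]
    · intro hne x y
      have hne' : e a ≠ e a' := fun h => hne (by rw [e.injective h])
      rw [hBB, hN, map_mul]
      have hc : (e a + e a') * (e a + e a') ≠ 0 := by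
        have : e a + e a' ≠ 0 := by rwa [Ne, CharTwo.add_eq_zero]
        exact mul_ne_zero this this
      have := gauss σ ψ hψ
        (fun t => σ (f (e a * t)) * f (e a' * t) * ψ ((e x + e y) * t)) _ hc
        (by
          intro s t
          have h1 : ψ (s * ((e a + e a') * (e a + e a') * t))
              = ψ (e a * s * (e a * t)) * ψ (e a' * s * (e a' * t)) := by
            rw [← AddChar.map_add_eq_mul]
            congr 1
            linear_combination (s * t * e a * e a') * (CharTwo.two_eq_zero (R := L))
          rw [h1]
          simp only [mul_add, hf, map_mul, hσψ, AddChar.map_add_eq_mul]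
          ring)
        (by
          intro s
          simp only [map_mul, hσσ, hσψ]
          linear_combination (σ (f (e a' * s)) * f (e a' * s)) * (hf1 (e a * s)) *
            (ψ ((e x + e y) * s) * ψ ((e x + e y) * s)) +
            hf1 (e a' * s) * (ψ ((e x + e y) * s) * ψ ((e x + e y) * s)) +
            hψψ ((e x + e y) * s))
      rw [mul_mul_mul_comm, this, hcard, map_inv₀, map_natCast, mul_assoc, inv_mul_cancel₀ hdF,
        mul_one]

end Stmt5Aux

/-- Let `k ≥ 1`, `p` an odd prime and `q = p^r ≡ 3 (mod 4)`.  Then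
`M_{2^k}(𝔽_{q²}) = 2^k + 1`: there exist `2^k + 1` pairwise mutually unbiased orthonormal
bases of `𝔽_{q²}^{2^k}`, and no `2^k + 2` such bases exist. -/
theorem stmt5 (k p r : ℕ) (hk : 1 ≤ k) (hp : p.Prime) (hpodd : Odd p)
    (hr : 1 ≤ r) (q : ℕ) (hq : q = p ^ r) (hcong : q % 4 = 3)
    (F : Type) [Field F] [Fintype F] (hF : Fintype.card F = q ^ 2) :
    (∃ B : Fin (2 ^ k + 1) → Fin (2 ^ k) → Fin (2 ^ k) → F,
        (∀ i, IsON q (B i)) ∧ ∀ i j, i ≠ j → IsMUB q (B i) (B j))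
    ∧ ¬ ∃ B : Fin (2 ^ k + 2) → Fin (2 ^ k) → Fin (2 ^ k) → F,
        (∀ i, IsON q (B i)) ∧ ∀ i j, i ≠ j → IsMUB q (B i) (B j) := by
  have : Fact p.Prime := ⟨hp⟩
  have : Fact (Nat.Prime 2) := ⟨Nat.prime_two⟩
  have : CharP F p := charP_of_card_eq_prime_pow (f := r * 2) (by rw [hF, hq, pow_mul])
  have : ExpChar F p := ExpChar.prime hp
  let σ : F →+* F := iterateFrobenius F p r
  have hσ : ∀ x, σ x = x ^ q := fun x => by rw [hq]; exact iterateFrobenius_def p r x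
  have hσσ : ∀ x, σ (σ x) = x := fun x => by
    rw [hσ, hσ, ← pow_mul, ← sq, ← hF, FiniteField.pow_card]
  have h2 : (2 : F) ≠ 0 := by
    intro h
    have h1 : p ∣ 2 := (CharP.cast_eq_zero_iff F p 2).1 (by exact_mod_cast h)
    have h3 := (Nat.prime_dvd_prime_iff_eq hp Nat.prime_two).1 h1
    subst h3
    exact absurd hpodd (by decide)
  have hdF : ((2 ^ k : ℕ) : F) ≠ 0 := by push_cast; exact pow_ne_zero _ h2
  refine ⟨?_, Stmt5Aux.upper q (2 ^ k) (Nat.one_lt_two_pow (by omega)) hdF σ hσ hσσ⟩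
  obtain ⟨I, hI⟩ : IsSquare (-1 : F) := by
    rw [FiniteField.isSquare_neg_one_iff, hF, pow_two, Nat.mul_mod, hcong]
    decide
  have hI2 : I ^ 2 = -1 := by rw [sq, hI]
  have hneg : (-1 : F) ≠ 1 := by
    intro h
    apply h2
    linear_combination -h
  have hσI : σ I = -I := by
    rw [hσ, ← Nat.div_add_mod q 4, hcong, pow_add, pow_mul,
      show I ^ 4 = 1 by rw [show 4 = 2 * 2 from rfl, pow_mul, hI2]; ring, one_pow]
    linear_combination I * hI2
  let L := GaloisField 2 k
  have : Fintype L := Fintype.ofFinite L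
  have hL : Fintype.card L = 2 ^ k := by
    rw [← Nat.card_eq_fintype_card]; exact GaloisField.card 2 k (by omega)
  have : CharP L 2 := charP_of_card_eq_prime_pow hL
  let e : Fin (2 ^ k) ≃ L := (Fintype.equivFinOfCardEq hL).symm
  obtain ⟨ψ, f, hψ, hψ1, hf, hf1⟩ := Stmt5Aux.exists_f L F I hI2 hneg
  refine Stmt5Aux.lower q (2 ^ k) hdF e σ hσ hσσ ((1 + I)⁻¹ ^ k) ?_ ψ f hψ hψ1 hf ?_
  · rw [map_pow, map_inv₀, map_add, map_one, hσI, ← mul_pow, ← mul_inv, inv_pow]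
    push_cast
    congr 2
    linear_combination -hI2
  · intro x
    obtain ⟨n, hn⟩ := hf1 x
    rw [hn, map_pow, hσI, ← mul_pow, show -I * I = 1 by linear_combination -hI2, one_pow]
end

section
/- Let d ≥ 2 be an integer, write d = ∏_{j=1}^n l_j^{k_j} as a product of prime powers with l_1^{k_1} < l_2^{k_2} < … < l_n^{k_n}. Then there are infinitely many primes p for which there exists an integer r_p ≥ 1 such that, setting q = p^{r_p}, the space 𝔽_{q²}^d contains a set of l_1^{k_1} + 1 pairwise mutually unbiased orthonormal bases; i.e., M_d(𝔽_{q²}) ≥ l_1^{k_1} + 1 for infinitely many such prime powers q of distinct characteristics. -/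
open Finset

namespace MUBaux

/-- Inner product over a general index type. -/
def ip {F ι : Type*} [Field F] [Fintype ι] (q : ℕ) (u v : ι → F) : F :=
  ∑ j, (u j) ^ q * v j

/-- A family of mutually unbiased bases with index types `A` and `ι`. -/
def Good {F A ι : Type*} [Field F] [Fintype ι] (q : ℕ) (B : A → ι → ι → F) : Prop :=
  (∀ a i, ip q (B a i) (B a i) = 1) ∧ (∀ a i j, i ≠ j → ip q (B a i) (B a j) = 0) ∧
  ∀ a b, a ≠ b → ∀ i j, (ip q (B a i) (B b j)) ^ (q + 1) = (Fintype.card ι : F)⁻¹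

lemma good_pi {F A J : Type*} [Field F] [Fintype J] {ι : J → Type*}
    [∀ j, Fintype (ι j)] [DecidableEq J] (q : ℕ) (B : ∀ j, A → ι j → ι j → F)
    (h : ∀ j, Good q (B j)) :
    Good q (fun a (i : ∀ j, ι j) (x : ∀ j, ι j) => ∏ j, B j a (i j) (x j)) := by
  have key : ∀ a b (i i' : ∀ j, ι j),
      ip q (fun x : ∀ j, ι j => ∏ j, B j a (i j) (x j)) (fun x => ∏ j, B j b (i' j) (x j))
        = ∏ j, ip q (B j a (i j)) (B j b (i' j)) := by
    intro a b i i'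
    unfold ip
    rw [Finset.prod_univ_sum, Fintype.piFinset_univ]
    refine Finset.sum_congr (by ext; simp) fun x _ => ?_
    rw [← Finset.prod_pow, ← Finset.prod_mul_distrib]
  refine ⟨fun a i => ?_, fun a i i' hne => ?_, fun a b hab i i' => ?_⟩
  · rw [key]
    exact Finset.prod_eq_one fun j _ => (h j).1 a (i j)
  · rw [key]
    obtain ⟨j, hj⟩ := Function.ne_iff.mp hne
    exact Finset.prod_eq_zero (Finset.mem_univ j) ((h j).2.1 a _ _ hj)
  · rw [key, ← Finset.prod_pow, Finset.prod_congr rfl fun j _ => (h j).2.2 a b hab _ _]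
    rw [Finset.prod_inv_distrib, ← Nat.cast_prod]
    congr 2
    exact Fintype.card_pi.symm

lemma sum_norm {F K : Type*} [Field F] [Field K] [Fintype K] (p : ℕ) [Fact p.Prime] [CharP F p]
    (ψ : AddChar K F) (hψ : ψ.IsPrimitive) (g : K → F) (hg : ∀ x, g x ^ (p + 1) = 1)
    (c : K) (hc : c ≠ 0) (hadd : ∀ x y, g (x + y) = g x * g y * ψ (c * x * y)) :
    (∑ x, g x) ^ (p + 1) = (Fintype.card K : F) := by
  classical
  have h0 : g 0 = 1 := by
    have h1 := hadd 0 0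
    have h2 : g 0 ≠ 0 := by
      intro h
      have := hg 0
      rw [h] at this
      simp at this
    simp only [add_zero, mul_zero, AddChar.map_zero_eq_one, mul_one] at h1
    exact (mul_right_cancel₀ h2 (by rw [one_mul]; exact h1)).symm
  rw [pow_succ, sum_pow_char, Finset.sum_mul_sum]
  calc ∑ i, ∑ j, g i ^ p * g j = ∑ x, ∑ t, g t * ψ (x * (c * t)) := by
        refine Finset.sum_congr rfl fun x _ => ?_
        rw [← Equiv.sum_comp (Equiv.addLeft x)]
        refine Finset.sum_congr rfl fun t _ => ?_
        simp only [Equiv.coe_addLeft]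
        rw [hadd]
        have := hg x
        rw [pow_succ] at this
        rw [show x * (c * t) = c * x * t by ring]
        linear_combination (g t * ψ (c * x * t)) * this
    _ = ∑ t, g t * ∑ x, ψ (x * (c * t)) := by
        rw [Finset.sum_comm]
        simp_rw [Finset.mul_sum]
    _ = (Fintype.card K : F) := by
        simp_rw [AddChar.sum_mulShift _ hψ]
        rw [Finset.sum_eq_single 0]
        · simp [h0]
        · intro b _ hb
          simp [hb, hc]
        · simp

lemma good_field {F K : Type*} [Field F] [Field K] [Fintype K] (p : ℕ) [Fact p.Prime] [CharP F p]
    (ψ : AddChar K F) (hψ : ψ.IsPrimitive) (hψ1 : ∀ x, ψ x ^ (p + 1) = 1)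
    (f : K → K → F) (hf : ∀ a x, f a x ^ (p + 1) = 1)
    (hadd : ∀ a x y, f a (x + y) = f a x * f a y * ψ (a * x * y))
    (α : F) (hα : α ^ (p + 1) = (Fintype.card K : F)⁻¹) (hm : (Fintype.card K : F) ≠ 0) :
    ∃ B : Option K → K → K → F, Good p B := by
  classical
  have hmp : (Fintype.card K : F)⁻¹ ^ p = (Fintype.card K : F)⁻¹ := by
    rw [inv_pow]
    congr 1
    exact map_natCast (frobenius F p) _
  have hp0 : p ≠ 0 := (Fact.out : p.Prime).ne_zero
  have hψp : ∀ x, ψ x ^ p = ψ (-x) := by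
    intro x
    have h := hψ1 x
    rw [pow_succ] at h
    have h2 : ψ (-x) * ψ x = 1 := by rw [← AddChar.map_add_eq_mul]; simp
    have h3 : ψ x ≠ 0 := by
      intro h3
      simp [h3] at h2
    exact mul_right_cancel₀ h3 (h.trans h2.symm)
  have ipsome : ∀ a b i j, ip p (fun x => α * f a x * ψ (i * x)) (fun x => α * f b x * ψ (j * x))
      = (Fintype.card K : F)⁻¹ * ∑ x, f a x ^ p * f b x * ψ ((j - i) * x) := by
    intro a b i j
    unfold ip
    rw [Finset.mul_sum]
    refine Finset.sum_congr rfl fun x _ => ?_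
    rw [mul_pow, mul_pow, hψp, ← hα, sub_mul, sub_eq_add_neg, AddChar.map_add_eq_mul]
    ring
  refine ⟨fun o => match o with
    | none => fun i => Pi.single i 1
    | some a => fun b x => α * f a x * ψ (b * x), ?_, ?_, ?_⟩
  · rintro (_ | a) i
    · simp [ip, Pi.single_apply, hp0]
    · simp only [ipsome]
      have : ∀ x, f a x ^ p * f a x = 1 := fun x => by rw [← pow_succ, hf]
      simp [this, hm]
  · rintro (_ | a) i j hij
    · simp [ip, Pi.single_apply, hp0, hij.symm]
    · simp only [ipsome]
      have : ∀ x, f a x ^ p * f a x = 1 := fun x => by rw [← pow_succ, hf]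
      simp only [this, one_mul]
      have := AddChar.sum_mulShift (j - i) hψ
      simp_rw [mul_comm _ (j - i)] at this
      rw [this, if_neg (sub_ne_zero.mpr hij.symm)]
      simp
  · rintro (_ | a) (_ | b) hab i j
    · exact absurd rfl hab
    · simp [ip, Pi.single_apply, hp0, mul_pow, hf, hψ1, hα]
    · simp only [ip, Pi.single_apply]
      simp only [mul_ite, mul_one, mul_zero, Finset.sum_ite_eq', Finset.sum_ite_eq,
        Finset.mem_univ, if_true]
      rw [← pow_mul, mul_comm p, pow_mul, mul_pow, mul_pow _ (f a j), hf, hψ1, hα]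
      simp [hmp]
    · simp only [ipsome]
      rw [mul_pow, sum_norm p ψ hψ _ _ (b - a)]
      · rw [pow_succ, hmp, mul_assoc, inv_mul_cancel₀ hm, mul_one]
      · rw [sub_ne_zero]
        rintro rfl
        exact hab rfl
      · intro x y
        rw [hadd, hadd, mul_pow, mul_pow, hψp, mul_add, AddChar.map_add_eq_mul,
          show (b - a) * x * y = b * x * y + -(a * x * y) by ring, AddChar.map_add_eq_mul]
        ring
      · intro x
        rw [mul_pow, mul_pow, hf, hψ1, ← pow_mul, mul_comm p, pow_mul, hf]
        simp

lemma exists_quad2 {F K : Type*} [Field F] [Field K] [Finite K] [Algebra (ZMod 2) K]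
    (I : F) (hI : I ^ 2 = -1) (a : K) :
    ∃ f : K → F, (∀ x, f x ^ 4 = 1) ∧
      ∀ x y, f (x + y) = f x * f y * (-1) ^ (Algebra.trace (ZMod 2) K (a * x * y)).val := by
  classical
  have hI0 : I ≠ 0 := by
    rintro rfl
    simp at hI
  have hI4 : I ^ 4 = 1 := by
    rw [show (4 : ℕ) = 2 * 2 by norm_num, pow_mul, hI]; norm_num
  let b := Module.finBasis (ZMod 2) K
  let L : K → Fin (Module.finrank (ZMod 2) K) → ℤ := fun x i => ((b.repr x i).val : ℤ)
  let M : Matrix (Fin (Module.finrank (ZMod 2) K)) (Fin (Module.finrank (ZMod 2) K)) ℤ :=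
    fun i j => ((Algebra.trace (ZMod 2) K (a * b i * b j)).val : ℤ)
  let Q := Matrix.toBilin' M
  have hQ : ∀ x y, Q x y = ∑ i, ∑ j, x i * M i j * y j := fun x y => Matrix.toBilin'_apply M x y
  have hMs : ∀ i j, M i j = M j i := by
    intro i j
    simp only [M]
    rw [show a * b i * b j = a * b j * b i by ring]
  have hQs : ∀ x y, Q x y = Q y x := by
    intro x y
    rw [hQ, hQ, Finset.sum_comm]
    refine Finset.sum_congr rfl fun i _ => Finset.sum_congr rfl fun j _ => ?_
    rw [hMs]; ring
  have hL : ∀ x y, ∃ c, L (x + y) = L x + L y + (2 : ℤ) • c := by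
    intro x y
    have : ∀ i, ∃ c : ℤ, L (x + y) i = L x i + L y i + 2 * c := by
      intro i
      have h : ((L x i + L y i : ℤ) : ZMod 2) = ((L (x + y) i : ℤ) : ZMod 2) := by
        simp [L]
      rw [ZMod.intCast_eq_intCast_iff_dvd_sub] at h
      obtain ⟨c, hc⟩ := h
      exact ⟨c, by push_cast at hc; linarith⟩
    choose c hc using this
    exact ⟨c, by ext i; simp [hc]⟩
  have hT : ∀ x y, ((Q (L x) (L y) : ℤ) : ZMod 2) = Algebra.trace (ZMod 2) K (a * x * y) := by
    intro x y
    conv_rhs => rw [← b.sum_repr x, ← b.sum_repr y]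
    rw [hQ, mul_assoc, Finset.sum_mul_sum, Finset.mul_sum, map_sum]
    push_cast
    refine Finset.sum_congr rfl fun i _ => ?_
    rw [Finset.mul_sum, map_sum]
    refine Finset.sum_congr rfl fun j _ => ?_
    simp only [L, M]
    rw [smul_mul_smul_comm, mul_smul_comm, map_smul, ← mul_assoc]
    simp only [Int.cast_natCast, ZMod.natCast_zmod_val, smul_eq_mul]
    ring
  refine ⟨fun x => I ^ (Q (L x) (L x)), fun x => ?_, fun x y => ?_⟩
  · rw [← zpow_natCast, ← zpow_mul, mul_comm, zpow_mul, zpow_natCast, hI4, one_zpow]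
  · obtain ⟨c, hc⟩ := hL x y
    have h1 := hT x y
    have h2 : ((Q (L x) (L y) : ℤ) : ZMod 2) =
        (((Algebra.trace (ZMod 2) K (a * x * y)).val : ℤ) : ZMod 2) := by
      rw [h1]; simp
    rw [ZMod.intCast_eq_intCast_iff_dvd_sub] at h2
    obtain ⟨e, he⟩ := h2
    have h3 : Q (L (x + y)) (L (x + y)) = Q (L x) (L x) + Q (L y) (L y) +
        2 * ((Algebra.trace (ZMod 2) K (a * x * y)).val : ℤ) +
        (4 : ℕ) * (Q (L x) c + Q (L y) c + Q c c - e) := by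
      rw [hc]
      simp only [map_add, LinearMap.add_apply, map_smul, LinearMap.smul_apply, smul_eq_mul]
      rw [hQs (L y) (L x), hQs c (L x), hQs c (L y)]
      push_cast at he ⊢
      linarith
    simp only []
    rw [h3, zpow_add₀ hI0, zpow_add₀ hI0, zpow_add₀ hI0, zpow_mul I (4 : ℕ), zpow_natCast, hI4,
      one_zpow, mul_one, zpow_mul I 2, zpow_natCast, show I ^ (2 : ℤ) = I ^ 2 from zpow_natCast I 2, hI]

lemma good_prime_pow {F : Type*} [Field F] [Fintype F] (p : ℕ) [Fact p.Prime]
    (hF : Fintype.card F = p ^ 2) (l : ℕ) [Fact l.Prime] (w : ℕ) (hw : 1 ≤ w)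
    (hlp : l ∣ p + 1) (h4 : 4 ∣ p + 1) [Fintype (GaloisField l w)] :
    ∃ B : Option (GaloisField l w) → GaloisField l w → GaloisField l w → F, Good p B := by
  classical
  have : CharP F p := charP_of_card_eq_prime_pow hF
  have hp : p.Prime := Fact.out
  have hl : l.Prime := Fact.out
  have hcard : Fintype.card (GaloisField l w) = l ^ w := by
    rw [← Nat.card_eq_fintype_card, GaloisField.card l w (by omega)]
  have hlne : (l : F) ≠ 0 := by
    rw [Ne, CharP.cast_eq_zero_iff F p, Nat.prime_dvd_prime_iff_eq hp hl]
    rintro rfl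
    have := (Nat.dvd_add_right (dvd_refl p)).mp hlp
    exact hp.one_lt.ne' (Nat.dvd_one.mp this)
  have hm : (Fintype.card (GaloisField l w) : F) ≠ 0 := by
    rw [hcard]; push_cast; exact pow_ne_zero _ hlne
  obtain ⟨g, hg⟩ := IsCyclic.exists_ofOrder_eq_natCard (α := Fˣ)
  have hpp : p ^ 2 - 1 = (p + 1) * (p - 1) := by
    have := Nat.sq_sub_sq p 1
    simpa using this
  have hgo : orderOf g = (p + 1) * (p - 1) := by
    rw [hg, Nat.card_eq_fintype_card, Fintype.card_units, hF, hpp]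
  have hp1 : 0 < p - 1 := by have := hp.two_le; omega
  -- primitive roots of unity
  have hroot : ∀ n, n ∣ p + 1 → ∃ z : F, IsPrimitiveRoot z n := by
    rintro n ⟨e, he⟩
    have hn0 : n ≠ 0 := by rintro rfl; simp at he
    have he0 : e ≠ 0 := by rintro rfl; simp at he
    have h1 : IsPrimitiveRoot (g : F) ((p + 1) * (p - 1)) := by
      rw [← hgo]
      exact (IsPrimitiveRoot.orderOf g).map_of_injective (f := Units.coeHom F) Units.val_injective
    refine ⟨(g : F) ^ (e * (p - 1)), h1.pow (by positivity) ?_⟩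
    rw [he]; ring
  -- norm surjectivity
  have hα : ∃ α : F, α ^ (p + 1) = (Fintype.card (GaloisField l w) : F)⁻¹ := by
    set m : F := (Fintype.card (GaloisField l w) : F) with hmdef
    have hmp : m ^ p = m := map_natCast (frobenius F p) _
    have hu : (Units.mk0 m hm) ^ (p - 1) = 1 := by
      ext
      simp only [Units.val_pow_eq_pow_val, Units.val_mk0, Units.val_one]
      apply mul_right_cancel₀ hm
      rw [← pow_succ, Nat.sub_add_cancel hp.one_lt.le, hmp, one_mul]
    have hgen : Units.mk0 m hm ∈ Submonoid.powers g := by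
      rw [mem_powers_iff_mem_zpowers]
      have : Subgroup.zpowers g = ⊤ := by
        apply Subgroup.eq_top_of_card_eq
        rw [Nat.card_zpowers, hg]
      rw [this]; trivial
    obtain ⟨s, hs⟩ := hgen
    simp only at hs
    rw [← hs, ← pow_mul] at hu
    have hd := orderOf_dvd_of_pow_eq_one hu
    rw [hgo] at hd
    obtain ⟨t, rfl⟩ := Nat.dvd_of_mul_dvd_mul_right hp1 hd
    refine ⟨((g ^ t)⁻¹ : Fˣ), ?_⟩
    rw [← Units.val_pow_eq_pow_val, inv_pow, ← pow_mul, mul_comm t, hs]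
    simp
  obtain ⟨α, hα⟩ := hα
  have hfin : ∀ (z : F) n, n ∣ p + 1 → z ^ n = 1 → z ^ (p + 1) = 1 := by
    rintro z n ⟨e, he⟩ h
    rw [he, pow_mul, h, one_pow]
  obtain ⟨ζ, hζ⟩ := hroot l hlp
  let ψ : AddChar (GaloisField l w) F := (AddChar.zmodChar l hζ.pow_eq_one).compAddMonoidHom
    (Algebra.trace (ZMod l) (GaloisField l w)).toAddMonoidHom
  have hψa : ∀ x, ψ x = ζ ^ (Algebra.trace (ZMod l) (GaloisField l w) x).val := fun x => rfl
  have hψ1 : ∀ x, ψ x ^ (p + 1) = 1 := by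
    intro x
    rw [hψa, ← pow_mul, mul_comm, pow_mul, hfin ζ l hlp hζ.pow_eq_one, one_pow]
  have hψ : ψ.IsPrimitive := by
    intro c hc h
    have htr := (traceForm_nondegenerate (ZMod l) (GaloisField l w)).1 c
    simp_rw [Algebra.traceForm_apply] at htr
    apply hc
    apply htr
    intro x
    have h1 : ψ (c * x) = 1 := by
      have := congrArg (fun χ : AddChar _ F => χ x) h
      simpa using this
    rw [hψa] at h1
    have h2 := (hζ.pow_eq_one_iff_dvd _).mp h1
    have h3 := ZMod.val_lt (Algebra.trace (ZMod l) (GaloisField l w) (c * x))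
    exact (ZMod.val_eq_zero _).mp (Nat.eq_zero_of_dvd_of_lt h2 h3)
  by_cases hl2 : l = 2
  · subst hl2
    obtain ⟨I, hI⟩ := hroot 4 h4
    have hI2 : I ^ 2 = -1 := by
      have h := hI.pow (a := 2) (b := 2) (by norm_num) (by norm_num)
      exact h.eq_neg_one_of_two_right
    have hz : ζ = -1 := hζ.eq_neg_one_of_two_right
    choose f hf1 hf2 using fun a : GaloisField 2 w => exists_quad2 I hI2 a
    refine good_field p ψ hψ hψ1 f (fun a x => hfin _ 4 h4 (hf1 a x)) ?_ α hα hm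
    intro a x y
    rw [hf2, hψa, hz]
  · have h2 : (2 : GaloisField l w) ≠ 0 := by
      intro h
      have : ((2 : ℕ) : GaloisField l w) = 0 := by exact_mod_cast h
      rw [CharP.cast_eq_zero_iff _ l, Nat.prime_dvd_prime_iff_eq hl Nat.prime_two] at this
      exact hl2 this
    refine good_field p ψ hψ hψ1 (fun a x => ψ (a * x * x / 2)) (fun a x => hψ1 _) ?_ α hα hm
    intro a x y
    rw [← AddChar.map_add_eq_mul, ← AddChar.map_add_eq_mul]
    congr 1
    field_simp
    ring

end MUBaux

/-- Write `d = ∏_j l_j^{k_j}` as a product of prime powers with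
`l_1^{k_1} < … < l_n^{k_n}`.  Then there are infinitely many primes `p` admitting an
`r_p ≥ 1` such that, with `q = p^{r_p}`, the space `𝔽_{q²}^d` contains `l_1^{k_1} + 1`
pairwise mutually unbiased orthonormal bases, i.e. `M_d(𝔽_{q²}) ≥ l_1^{k_1} + 1`. -/
theorem stmt9 (d : ℕ) (hd : 2 ≤ d) (n : ℕ) (hn : 0 < n)
    (l w : Fin n → ℕ) (hl : ∀ j, (l j).Prime) (hw : ∀ j, 1 ≤ w j)
    (hprod : d = ∏ j, l j ^ w j)
    (hdistinct : ∀ i j : Fin n, i ≠ j → l i ≠ l j)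
    (hmono : ∀ i j : Fin n, i < j → l i ^ w i < l j ^ w j) :
    {p : ℕ | p.Prime ∧ ∃ r : ℕ, 1 ≤ r ∧
      ∀ (F : Type) [Field F] [Fintype F], Fintype.card F = (p ^ r) ^ 2 →
        ∃ B : Fin (l ⟨0, hn⟩ ^ w ⟨0, hn⟩ + 1) → Fin d → Fin d → F,
          (∀ i, IsON (p ^ r) (B i)) ∧
          ∀ i j, i ≠ j → IsMUB (p ^ r) (B i) (B j)}.Infinite := by
  classical
  have : NeZero (4 * d) := ⟨by omega⟩
  rw [Set.infinite_iff_exists_gt]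
  intro N
  obtain ⟨p, hpN, hp, hpe⟩ := Nat.forall_exists_prime_gt_and_eq_mod
    (q := 4 * d) (a := -1) isUnit_one.neg N
  have hdvd : 4 * d ∣ p + 1 := by
    rw [← ZMod.natCast_eq_zero_iff]
    push_cast
    rw [hpe]; ring
  refine ⟨p, ⟨hp, 1, le_refl _, ?_⟩, hpN⟩
  intro F _ _ hF
  rw [pow_one] at hF ⊢
  have : Fact p.Prime := ⟨hp⟩
  have hlf : ∀ j, Fact (l j).Prime := fun j => ⟨hl j⟩
  have hfin : ∀ j, Fintype (GaloisField (l j) (w j)) := fun j => Fintype.ofFinite _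
  have hcard : ∀ j, Fintype.card (GaloisField (l j) (w j)) = l j ^ w j := fun j => by
    rw [← Nat.card_eq_fintype_card, GaloisField.card _ _ (by have := hw j; omega)]
  have hB : ∀ j, ∃ B : Fin (l ⟨0, hn⟩ ^ w ⟨0, hn⟩ + 1) →
      GaloisField (l j) (w j) → GaloisField (l j) (w j) → F, MUBaux.Good p B := by
    intro j
    obtain ⟨B, hB⟩ := MUBaux.good_prime_pow (F := F) p hF (l j) (w j) (hw j)
      (dvd_trans (dvd_trans (dvd_pow_self _ (by have := hw j; omega))
        (dvd_trans (Finset.dvd_prod_of_mem (fun j => l j ^ w j) (Finset.mem_univ j))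
          (hprod ▸ dvd_mul_left d 4))) hdvd)
      (dvd_trans (dvd_mul_right 4 d) hdvd)
    have hle : l ⟨0, hn⟩ ^ w ⟨0, hn⟩ ≤ l j ^ w j := by
      rcases eq_or_ne j ⟨0, hn⟩ with rfl | hj
      · exact le_refl _
      · refine (hmono ⟨0, hn⟩ j ?_).le
        rw [Fin.lt_def]
        exact Nat.pos_of_ne_zero fun h => hj (Fin.ext h)
    have : Nonempty (Fin (l ⟨0, hn⟩ ^ w ⟨0, hn⟩ + 1) ↪ Option (GaloisField (l j) (w j))) := by
      apply Function.Embedding.nonempty_of_card_le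
      rw [Fintype.card_option, hcard, Fintype.card_fin]
      omega
    obtain ⟨e⟩ := this
    exact ⟨fun a => B (e a), fun a => hB.1 _, fun a => hB.2.1 _,
      fun a b hab => hB.2.2 _ _ (e.injective.ne hab)⟩
  choose B hB using hB
  have hG := MUBaux.good_pi p B hB
  have hc : Fintype.card (∀ j, GaloisField (l j) (w j)) = d := by
    rw [Fintype.card_pi, hprod]
    exact Finset.prod_congr rfl fun j _ => hcard j
  let e : Fin d ≃ (∀ j, GaloisField (l j) (w j)) := (Fintype.equivFinOfCardEq hc).symm
  have hip : ∀ u v : (∀ j, GaloisField (l j) (w j)) → F,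
      hermInner p (fun x => u (e x)) (fun x => v (e x)) = MUBaux.ip p u v := by
    intro u v
    unfold hermInner MUBaux.ip
    exact Equiv.sum_comp e (fun x => u x ^ p * v x)
  refine ⟨fun a i x => ∏ j, B j a (e i j) (e x j), fun a i i' => ?_, fun a b hab i i' => ?_⟩
  · refine (hip (fun x => ∏ j, B j a (e i j) (x j)) (fun x => ∏ j, B j a (e i' j) (x j))).trans ?_
    split_ifs with h
    · subst h
      exact hG.1 a (e i)
    · exact hG.2.1 a _ _ (e.injective.ne h)
  · have h1 := hip (fun x => ∏ j, B j a (e i j) (x j)) (fun x => ∏ j, B j b (e i' j) (x j))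
    have h2 := hG.2.2 a b hab (e i) (e i')
    rw [hc] at h2
    rw [← h2]
    exact congrArg (· ^ (p + 1)) h1
end

section
/- Let q be a prime power with q ≡ 5 (mod 12). Then in 𝔽_{q²}^6 there exists a set {B_0, B_1, B_2} of three pairwise mutually unbiased orthonormal bases, where B_0 is the computational basis (the standard basis vectors e_1, …, e_6), together with four unit vectors v_1, v_2, v_3, v_4 that are pairwise orthogonal and each of which is mutually unbiased to every vector of B_0 ∪ B_1 ∪ B_2. -/
open Finset

/-- Coordinates `(a,b,c,d)` of `a + b s + (c + d s) w`, where `s ^ 2 = 3`, `w ^ 2 = -1 - w`. -/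
abbrev Q4 := ℤ × ℤ × ℤ × ℤ

namespace Q4

def mul' : Q4 → Q4 → Q4 := fun (a, b, c, d) (a', b', c', d') =>
  (a * a' + 3 * b * b' - (c * c' + 3 * d * d'),
   a * b' + b * a' - (c * d' + d * c'),
   a * c' + 3 * b * d' + (c * a' + 3 * d * b') - (c * c' + 3 * d * d'),
   a * d' + b * c' + (c * b' + d * a') - (c * d' + d * c'))

def add' : Q4 → Q4 → Q4 := fun (a, b, c, d) (a', b', c', d') =>
  (a + a', b + b', c + c', d + d')

def conj : Q4 → Q4 := fun (a, b, c, d) => (a - c, d - b, -c, d)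

def ip (u v : Fin 6 → Q4) : Q4 :=
  add' (mul' (conj (u 0)) (v 0)) (add' (mul' (conj (u 1)) (v 1)) (add' (mul' (conj (u 2)) (v 2))
    (add' (mul' (conj (u 3)) (v 3)) (add' (mul' (conj (u 4)) (v 4)) (mul' (conj (u 5)) (v 5))))))

def nrm (z : Q4) : Q4 := mul' (conj z) z

def o : Q4 := (1, 0, 0, 0)
def m : Q4 := (-1, 0, 0, 0)
def x : Q4 := (-2, -1, 0, 0)
def y : Q4 := (-2, 1, 0, 0)
def nx : Q4 := (2, 1, 0, 0)
def xx : Q4 := mul' x x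
def w : Q4 := (0, 0, 1, 0)
def z : Q4 := (-1, 0, -1, 0)
def nw : Q4 := (0, 0, -1, 0)
def nz : Q4 := (1, 0, 1, 0)

def H : Fin 2 → Fin 6 → Fin 6 → Q4 :=
  ![![![o, o, o, o, o, o], ![o, o, o, o, x, y], ![o, nx, m, m, x, o],
      ![o, m, nx, m, x, o], ![o, m, m, nx, x, o], ![o, x, x, x, xx, x]],
    ![![o, nx, nx, m, x, o], ![o, nx, m, nx, x, o], ![o, m, nx, nx, x, o],
      ![o, x, x, x, xx, o], ![o, x, x, x, x, x], ![o, o, o, o, o, y]]]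

def V : Fin 4 → Fin 6 → Q4 :=
  ![![o, z, w, o, mul' z x, w], ![o, nz, nw, m, mul' z x, w],
    ![o, w, z, o, mul' w x, z], ![o, nw, nz, m, mul' w x, z]]

set_option maxRecDepth 100000

theorem H_on : ∀ i j k, ip (H i j) (H i k) = if j = k then (6, 0, 0, 0) else (0, 0, 0, 0) := by
  decide +kernel

theorem H_mub : ∀ i i' j k, i ≠ i' → nrm (ip (H i j) (H i' k)) = (6, 0, 0, 0) := by
  decide +kernel

theorem H_nrm : ∀ i j k, nrm (H i j k) = (1, 0, 0, 0) := by decide +kernel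

theorem V_on : ∀ a b, ip (V a) (V b) = if a = b then (6, 0, 0, 0) else (0, 0, 0, 0) := by
  decide +kernel

theorem V_mub : ∀ a i j, nrm (ip (V a) (H i j)) = (6, 0, 0, 0) := by decide +kernel

theorem V_nrm : ∀ a j, nrm (V a j) = (1, 0, 0, 0) := by decide +kernel

def ev {F : Type} [Field F] (s w : F) : Q4 → F := fun (a, b, c, d) =>
  (a : F) + b * s + (c + d * s) * w

section
variable {F : Type} [Field F] {s w : F}

theorem ev_add (u v : Q4) : ev s w (add' u v) = ev s w u + ev s w v := by
  obtain ⟨a, b, c, d⟩ := u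
  obtain ⟨a', b', c', d'⟩ := v
  simp only [ev, add']
  push_cast
  ring

theorem ev_mul (hs : s ^ 2 = 3) (hw : w ^ 2 = -1 - w) (u v : Q4) :
    ev s w (mul' u v) = ev s w u * ev s w v := by
  obtain ⟨a, b, c, d⟩ := u
  obtain ⟨a', b', c', d'⟩ := v
  simp only [ev, mul']
  push_cast
  linear_combination (-(b * b' : F) - (b * d' + d * b') * w + d * d' * (1 + w)) * hs
    - ((c + d * s) * (c' + d' * s) : F) * hw

theorem ev_conj (f : F →+* F) (hs : f s = -s) (hw : f w = -1 - w) (u : Q4) :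
    f (ev s w u) = ev s w (conj u) := by
  obtain ⟨a, b, c, d⟩ := u
  simp only [ev, conj, map_add, map_mul, map_intCast, hs, hw]
  push_cast
  ring

end

end Q4

open Q4 in
theorem aux (q : ℕ) (F : Type) [Field F] (f : F →+* F) (hf : ∀ a, f a = a ^ q)
    (s w c : F) (hs : s ^ 2 = 3) (hw : w ^ 2 = -1 - w) (fs : f s = -s) (fw : f w = -1 - w)
    (hc : f c * c = (6 : F)⁻¹) (h6 : (6 : F) ≠ 0) :
    ∃ B : Fin 3 → Fin 6 → Fin 6 → F,
      (B 0 = fun i j => if i = j then 1 else 0)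
      ∧ (∀ i, IsON q (B i))
      ∧ (∀ i j, i ≠ j → IsMUB q (B i) (B j))
      ∧ ∃ v : Fin 4 → Fin 6 → F,
          (∀ a b : Fin 4, hermInner q (v a) (v b) = if a = b then 1 else 0)
          ∧ ∀ (a : Fin 4) (i : Fin 3) (j : Fin 6),
              (hermInner q (v a) (B i j)) ^ (q + 1) = (6 : F)⁻¹ := by
  have hN : ∀ a : F, a ^ (q + 1) = f a * a := fun a => by rw [hf, pow_succ]
  let E : (Fin 6 → Q4) → Fin 6 → F := fun u j => c * ev s w (u j)
  let e : Fin 6 → Fin 6 → F := fun i j => if i = j then 1 else 0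
  have hq0 : (0 : F) ^ q = 0 := by rw [← hf, map_zero]
  have ev6 : ev s w (6, 0, 0, 0) = 6 := by simp [ev]
  have ev0 : ev s w (0, 0, 0, 0) = 0 := by simp [ev]
  have ev1 : ev s w (1, 0, 0, 0) = 1 := by simp [ev]
  have evn : ∀ u, f (ev s w u) * ev s w u = ev s w (nrm u) := fun u => by
    rw [ev_conj f fs fw, nrm, ev_mul hs hw]
  have EE : ∀ u v, hermInner q (E u) (E v) = (6 : F)⁻¹ * ev s w (ip u v) := by
    intro u v
    simp only [hermInner, E, ← hf, map_mul, Fin.sum_univ_six, ip, ev_add, ev_mul hs hw,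
      ev_conj f fs fw, ← hc]
    ring
  have EN : ∀ u v, nrm (ip u v) = (6, 0, 0, 0) → hermInner q (E u) (E v) ^ (q + 1) = (6 : F)⁻¹ := by
    intro u v h
    rw [EE, hN, map_mul, mul_mul_mul_comm, evn, h, ev6, map_inv₀, map_ofNat]
    field_simp
  have ED : ∀ u v (P : Prop) [Decidable P],
      ip u v = (if P then (6, 0, 0, 0) else (0, 0, 0, 0)) →
      hermInner q (E u) (E v) = if P then 1 else 0 := by
    intro u v P _ h
    rw [EE, h]
    split_ifs
    · rw [ev6, inv_mul_cancel₀ h6]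
    · rw [ev0, mul_zero]
  have ee : ∀ i (v : Fin 6 → F), hermInner q (e i) v = v i := by
    intro i v
    simp [hermInner, e, ite_pow, hq0]
  have eE : ∀ (u : Fin 6 → F) i, hermInner q u (e i) = f (u i) := by
    intro u i
    simp [hermInner, e, hf]
  have ffN : ∀ a : F, f a ^ (q + 1) = f (f a * a) := fun a => by rw [hN, ← map_mul]
  have Ej : ∀ u j, nrm (u j) = (1, 0, 0, 0) → f (E u j) * E u j = (6 : F)⁻¹ := by
    intro u j h
    simp only [E, map_mul]
    rw [mul_mul_mul_comm, evn, h, ev1, hc, mul_one]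
  have f6 : f (6 : F)⁻¹ = 6⁻¹ := by rw [map_inv₀, map_ofNat]
  have c6 : ((6 : ℕ) : F)⁻¹ = (6 : F)⁻¹ := by norm_num
  refine ⟨![e, fun j => E (H 0 j), fun j => E (H 1 j)], rfl, ?_, ?_, fun a => E (V a), ?_, ?_⟩
  · intro i
    fin_cases i
    · intro j k
      change hermInner q (e j) (e k) = _
      rw [ee]
      simp [e, eq_comm]
    · exact fun j k => ED _ _ _ (H_on 0 j k)
    · exact fun j k => ED _ _ _ (H_on 1 j k)
  · have h1 : ∀ i, IsMUB q e (fun j => E (H i j)) := by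
      intro i j k
      rw [c6, ee, hN, Ej _ _ (H_nrm i k j)]
    have h2 : ∀ i, IsMUB q (fun j => E (H i j)) e := by
      intro i j k
      rw [c6, eE, ffN, Ej _ _ (H_nrm i j k), f6]
    have h3 : ∀ i i', i ≠ i' → IsMUB q (fun j => E (H i j)) (fun j => E (H i' j)) := by
      intro i i' h j k
      rw [c6]
      exact EN _ _ (H_mub i i' j k h)
    intro i j hij
    fin_cases i <;> fin_cases j
    · exact absurd rfl hij
    · exact h1 0
    · exact h1 1
    · exact h2 0
    · exact absurd rfl hij
    · exact h3 0 1 (by decide)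
    · exact h2 1
    · exact h3 1 0 (by decide)
    · exact absurd rfl hij
  · exact fun a b => ED _ _ _ (V_on a b)
  · intro a i j
    fin_cases i
    · change hermInner q (E (V a)) (e j) ^ (q + 1) = _
      rw [eE, ffN, Ej _ _ (V_nrm a j), f6]
    · exact EN _ _ (V_mub a 0 j)
    · exact EN _ _ (V_mub a 1 j)

/-- For every prime power `q ≡ 5 (mod 12)` there exists in `𝔽_{q²}^6` a
set of three pairwise mutually unbiased orthonormal bases `B_0, B_1, B_2`, with `B_0` the
computational basis, together with four pairwise orthogonal unit vectors each of which is
mutually unbiased to every vector of `B_0 ∪ B_1 ∪ B_2`. -/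
theorem stmt12 (q : ℕ) (hq : IsPrimePow q) (hmod : q % 12 = 5)
    (F : Type) [Field F] [Fintype F] (hF : Fintype.card F = q ^ 2) :
    ∃ B : Fin 3 → Fin 6 → Fin 6 → F,
      (B 0 = fun i j => if i = j then 1 else 0)
      ∧ (∀ i, IsON q (B i))
      ∧ (∀ i j, i ≠ j → IsMUB q (B i) (B j))
      ∧ ∃ v : Fin 4 → Fin 6 → F,
          (∀ a b : Fin 4, hermInner q (v a) (v b) = if a = b then 1 else 0)
          ∧ ∀ (a : Fin 4) (i : Fin 3) (j : Fin 6),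
              (hermInner q (v a) (B i j)) ^ (q + 1) = (6 : F)⁻¹ := by
  obtain ⟨p, k, hp, hk, rfl⟩ := hq
  have hp' : p.Prime := hp.nat_prime
  haveI : Fact p.Prime := ⟨hp'⟩
  set q := p ^ k with hqdef
  haveI : CharP F p := by
    obtain ⟨r, hr⟩ := CharP.exists F
    haveI := hr
    obtain ⟨n, hr', hn⟩ := FiniteField.card F r
    rw [hF, hqdef, ← pow_mul] at hn
    have : p ∣ r ^ (n : ℕ) := by
      rw [← hn]
      exact dvd_pow_self p (by positivity)
    have := (Nat.prime_dvd_prime_iff_eq hp' hr').1 (hp'.dvd_of_dvd_pow this)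
    rwa [this]
  have hf : ∀ a : F, iterateFrobenius F p k a = a ^ q := fun a => iterateFrobenius_def p k a
  have hnd : ∀ r : ℕ, r.Prime → ((r : ℕ) : F) = 0 → r ∣ q := by
    intro r hr h
    have := (CharP.cast_eq_zero_iff F p r).1 h
    rw [(Nat.prime_dvd_prime_iff_eq hp' hr).1 this] at hqdef
    rw [hqdef]
    exact dvd_pow_self r hk.ne'
  have h2 : (2 : F) ≠ 0 := fun h => by
    have := hnd 2 Nat.prime_two (by exact_mod_cast h)
    omega
  have h3 : (3 : F) ≠ 0 := fun h => by
    have := hnd 3 Nat.prime_three (by exact_mod_cast h)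
    omega
  have h6 : (6 : F) ≠ 0 := by
    have : (6 : F) = 2 * 3 := by norm_num
    rw [this]
    exact mul_ne_zero h2 h3
  obtain ⟨t, ht⟩ : ∃ t, q = 12 * t + 5 := ⟨q / 12, by omega⟩
  -- square root of `-1`
  obtain ⟨i, hi⟩ : IsSquare (-1 : F) := by
    rw [FiniteField.isSquare_neg_one_iff, hF, ht]
    have : (12 * t + 5) ^ 2 = 4 * (36 * t ^ 2 + 30 * t + 6) + 1 := by ring
    omega
  have hi2 : i ^ 2 = -1 := by rw [hi]; ring
  have hiq : i ^ q = i := by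
    have : q = 2 * (2 * (3 * t + 1)) + 1 := by omega
    rw [this, pow_succ, pow_mul, hi2, pow_mul]
    simp
  -- cube root of unity
  obtain ⟨w, hw3, hw1⟩ : ∃ w : F, w ^ 3 = 1 ∧ w ≠ 1 := by
    haveI : Fact (Nat.Prime 3) := ⟨Nat.prime_three⟩
    classical
    obtain ⟨g, hg⟩ := exists_prime_orderOf_dvd_card (G := Fˣ) 3 (by
      rw [Fintype.card_units, hF, ht]
      have : (12 * t + 5) ^ 2 = 3 * (48 * t ^ 2 + 40 * t + 8) + 1 := by ring
      omega)
    refine ⟨g, ?_, ?_⟩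
    · rw [← Units.val_pow_eq_pow_val, ← hg, pow_orderOf_eq_one, Units.val_one]
    · intro h
      rw [Units.val_eq_one] at h
      rw [h, orderOf_one] at hg
      omega
  have hw : w ^ 2 = -1 - w := by
    have : (w - 1) * (w ^ 2 + w + 1) = 0 := by linear_combination hw3
    rcases mul_eq_zero.1 this with h | h
    · exact absurd (sub_eq_zero.1 h) hw1
    · linear_combination h
  have hwq : w ^ q = -1 - w := by
    have : q = 3 * (4 * t + 1) + 2 := by omega
    rw [this, pow_add, pow_mul, hw3, one_pow, one_mul, hw]
  have fw : iterateFrobenius F p k w = -1 - w := by rw [hf, hwq]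
  have fi : iterateFrobenius F p k i = i := by rw [hf, hiq]
  have hs : (i * (2 * w + 1)) ^ 2 = 3 := by
    linear_combination (2 * w + 1) ^ 2 * hi2 - 4 * hw
  have fs : iterateFrobenius F p k (i * (2 * w + 1)) = -(i * (2 * w + 1)) := by
    simp only [map_mul, map_add, map_one, map_ofNat, fw, fi]
    ring
  generalize i * (2 * w + 1) = s at hs fs
  refine aux q F (iterateFrobenius F p k) hf s w (3 + s)⁻¹ hs hw fs fw ?_ h6
  rw [map_inv₀, ← mul_inv, map_add, map_ofNat, fs]
  congr 1
  linear_combination -hs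
end

section
/- Let q be an odd prime power with q ≡ 1 (mod 4). Then there exist two mutually unbiased orthonormal bases of 𝔽_{q²}^2, but there is no set of three pairwise mutually unbiased orthonormal bases of 𝔽_{q²}^2; that is, M_2(𝔽_{q²}) = 2. -/
open Finset

theorem aux_frob (q : ℕ) (hq : IsPrimePow q) (F : Type) [Field F] [Fintype F]
    (hF : Fintype.card F = q ^ 2) :
    ∃ σ : F →+* F, (∀ x, σ x = x ^ q) ∧ ∀ x, σ (σ x) = x := by
  obtain ⟨p, n, hp, hn, rfl⟩ := hq
  have hp' : p.Prime := hp.nat_prime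
  haveI : Fact p.Prime := ⟨hp'⟩
  obtain ⟨r, hr⟩ := CharP.exists F
  obtain ⟨m, hr', hm⟩ := FiniteField.card F r
  have hpr : r = p := by
    rw [hF, ← pow_mul] at hm
    have h1 : r ∣ p ^ (n * 2) := by rw [hm]; exact dvd_pow_self _ m.ne_zero
    exact (Nat.prime_dvd_prime_iff_eq hr' hp').1 (hr'.dvd_of_dvd_pow h1)
  subst hpr
  refine ⟨iterateFrobenius F r n, fun x => iterateFrobenius_def r n x, fun x => ?_⟩
  rw [iterateFrobenius_def, iterateFrobenius_def, ← pow_mul, ← sq, ← hF, FiniteField.pow_card]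

theorem aux_norm (q : ℕ) (hq : 1 < q) (F : Type) [Field F] [Fintype F]
    (hF : Fintype.card F = q ^ 2) (a : F) (ha : a ≠ 0) (h : a ^ q = a) :
    ∃ x : F, x ^ (q + 1) = a := by
  classical
  obtain ⟨g, hg⟩ := IsCyclic.exists_generator (α := Fˣ)
  have ho : orderOf g = q ^ 2 - 1 := by
    rw [orderOf_eq_card_of_forall_mem_zpowers hg, Nat.card_eq_fintype_card, Fintype.card_units, hF]
  obtain ⟨k, hk⟩ := (mem_powers_iff_mem_zpowers).2 (hg (Units.mk0 a ha))
  have hk : g ^ k = Units.mk0 a ha := hk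
  obtain ⟨s, rfl⟩ : ∃ s, q = s + 1 := ⟨q - 1, by omega⟩
  have h1 : (Units.mk0 a ha) ^ s = 1 := by
    ext
    simp only [Units.val_pow_eq_pow_val, Units.val_mk0, Units.val_one]
    rw [pow_succ] at h
    exact mul_right_cancel₀ ha (by rw [h, one_mul])
  rw [← hk, ← pow_mul] at h1
  have h2 := orderOf_dvd_of_pow_eq_one h1
  rw [ho] at h2
  have h3 : (s + 1) ^ 2 - 1 = (s + 1 + 1) * s := by
    have : (s + 1) ^ 2 = (s + 1 + 1) * s + 1 := by ring
    omega
  rw [h3] at h2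
  obtain ⟨m, rfl⟩ := Nat.dvd_of_mul_dvd_mul_right (by omega) h2
  refine ⟨((g ^ m : Fˣ) : F), ?_⟩
  have := congrArg Units.val hk
  rw [mul_comm, pow_mul] at this
  simpa using this

/-- For an odd prime power `q ≡ 1 (mod 4)` there exist two mutually
unbiased orthonormal bases of `𝔽_{q²}^2`, but no set of three pairwise mutually unbiased
orthonormal bases; that is, `M_2(𝔽_{q²}) = 2`. -/
theorem stmt15 (q : ℕ) (hq : IsPrimePow q) (hodd : Odd q) (hmod : q % 4 = 1)
    (F : Type) [Field F] [Fintype F] (hF : Fintype.card F = q ^ 2) :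
    (∃ B C : Fin 2 → Fin 2 → F, IsON q B ∧ IsON q C ∧ IsMUB q B C)
    ∧ ¬ ∃ B : Fin 3 → Fin 2 → Fin 2 → F,
        (∀ i, IsON q (B i)) ∧ ∀ i j, i ≠ j → IsMUB q (B i) (B j) := by
  obtain ⟨σ, hσ, hσσ⟩ := aux_frob q hq F hF
  have h2 : (2 : F) ≠ 0 := by
    apply Ring.two_ne_zero
    intro hc
    have := FiniteField.even_card_of_char_two hc
    rw [hF, ← Nat.even_iff, Nat.even_pow] at this
    exact (Nat.not_even_iff_odd.2 hodd) this.1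
  have hq1 : 1 < q := hq.one_lt
  constructor
  · obtain ⟨x, hx⟩ := aux_norm q hq1 F hF (2⁻¹ : F) (inv_ne_zero h2) (by
      rw [← hσ, map_inv₀, map_ofNat])
    have hx' : x ^ q * x = 2⁻¹ := by rw [← hx, pow_succ]
    have hs : x ^ q * x + x ^ q * x = 1 := by
      rw [hx']; field_simp; norm_num
    have hn : (-x) ^ q = -x ^ q := hodd.neg_pow x
    have he : (-x) ^ (q + 1) = x ^ (q + 1) := (hodd.add_one).neg_pow x
    have hq0 : q ≠ 0 := by omega
    refine ⟨![![1, 0], ![0, 1]], ![![x, x], ![x, -x]], ?_, ?_, ?_⟩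
    · intro i j
      fin_cases i <;> fin_cases j <;> simp [hermInner, Fin.sum_univ_two, hq0]
    · intro i j
      fin_cases i <;> fin_cases j <;> simp [hermInner, Fin.sum_univ_two, hn, hs]
    · intro i j
      fin_cases i <;> fin_cases j <;> simp [hermInner, Fin.sum_univ_two, hq0, he, hx]
  · rintro ⟨B, hON, hM⟩
    have hA := hON 0
    set A := B 0 with hAdef
    set b := B 1 0 with hb
    set c := B 2 0 with hc
    have comp : (Matrix.of fun k i => A i k) * (Matrix.of fun i k => σ (A i k)) = 1 := by
      rw [mul_eq_one_comm]
      ext i j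
      have := hA i j
      simp only [hermInner, ← hσ] at this
      rw [Matrix.mul_apply, Matrix.one_apply]
      exact this
    have e00 := congrFun (congrFun comp 0) 0
    have e01 := congrFun (congrFun comp 0) 1
    have e10 := congrFun (congrFun comp 1) 0
    have e11 := congrFun (congrFun comp 1) 1
    simp [Matrix.mul_apply, Fin.sum_univ_two] at e00 e01 e10 e11
    have m1 := hM 0 1 (by decide) 0 0
    have m2 := hM 0 1 (by decide) 1 0
    have m3 := hM 0 2 (by decide) 0 0
    have m4 := hM 0 2 (by decide) 1 0
    have m5 := hM 1 2 (by decide) 0 0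
    rw [← hAdef, ← hb] at m1 m2
    rw [← hAdef, ← hc] at m3 m4
    rw [← hb, ← hc] at m5
    have key : hermInner q b c = σ (hermInner q (A 0) b) * hermInner q (A 0) c
        + σ (hermInner q (A 1) b) * hermInner q (A 1) c := by
      simp only [hermInner, Fin.sum_univ_two, ← hσ, map_add, map_mul, hσσ]
      linear_combination (-(σ (b 0) * c 0)) * e00 - (σ (b 0) * c 1) * e01
        - (σ (b 1) * c 0) * e10 - (σ (b 1) * c 1) * e11
    rw [key] at m5
    generalize hermInner q (A 0) b = x at *
    generalize hermInner q (A 1) b = y at *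
    generalize hermInner q (A 0) c = z at *
    generalize hermInner q (A 1) c = w at *
    simp only [pow_succ _ q, ← hσ, map_add, map_mul, hσσ, Nat.cast_ofNat] at m1 m2 m3 m4 m5
    have h22 : (2 : F) * 2⁻¹ = 1 := mul_inv_cancel₀ h2
    generalize (2 : F)⁻¹ = t at *
    obtain ⟨s, hs⟩ : ∃ s, s = 4 * (σ x * z * y * σ w) := ⟨_, rfl⟩
    have hσs : σ s = 4 * (x * σ z * σ y * w) := by
      rw [hs]; simp only [map_mul, hσσ, map_ofNat]
    have hsum : σ s = - s := by
      rw [hσs, hs]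
      have : 2 * t * t = t := by rw [h22, one_mul]
      linear_combination 4 * m5 - 4 * σ z * z * m1 - 4 * t * m3 - 4 * σ w * w * m2 - 4 * t * m4 - 4 * this
    have hprod : s * σ s = 1 := by
      rw [hσs, hs]
      have : 16 * (t * t * t * t) = 1 := by
        linear_combination (8*t^3 + 4*t^2 + 2*t + 1) * h22
      rw [← this, ← m1]
      have : (σ x * x) * (σ y * y) * (σ z * z) * (σ w * w) = t * t * t * t := by
        rw [m1, m2, m3, m4]
      rw [m1]
      linear_combination 16 * this
    have hsq : s ^ 2 = -1 := by rw [hsum] at hprod; linear_combination -hprod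
    have hsame : σ s = s := by
      rw [hσ]
      obtain ⟨k, hk⟩ : ∃ k, q = 2 * (2 * k) + 1 := ⟨q / 4, by omega⟩
      rw [hk, pow_succ, pow_mul, hsq, pow_mul]; simp
    have : s = 0 := by
      have : 2 * s = 0 := by linear_combination hsum - hsame
      exact (mul_eq_zero.1 this).resolve_left h2
    rw [this] at hsq
    norm_num at hsq
end

section
/- Let q be a prime power coprime to 3 with q ≡ 1 (mod 3). Then no two orthonormal bases of 𝔽_{q²}^3 are mutually unbiased to each other; that is, M_3(𝔽_{q²}) = 1. -/
open Finset

lemma aux_hom (q : ℕ) (hq : IsPrimePow q)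
    (F : Type) [Field F] [Fintype F] (hF : Fintype.card F = q ^ 2) :
    ∃ s : F →+* F, (∀ x, s x = x ^ q) ∧ ∀ x, s (s x) = x := by
  obtain ⟨p, k, hp, hk, rfl⟩ := hq
  have hp' : Nat.Prime p := hp.nat_prime
  obtain ⟨r, hr⟩ := CharP.exists F
  obtain ⟨n, hrp, hn⟩ := FiniteField.card F r
  have h1 : r ∣ p := by
    have : r ∣ (p ^ k) ^ 2 := by
      rw [← hF, hn]; exact dvd_pow_self _ n.ne_zero
    exact hrp.dvd_of_dvd_pow (hrp.dvd_of_dvd_pow this)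
  have h2 : r = p := (Nat.prime_dvd_prime_iff_eq hrp hp').1 h1
  subst h2
  haveI : Fact r.Prime := ⟨hp'⟩
  refine ⟨iterateFrobenius F r k, fun x => iterateFrobenius_def _ _ _, fun x => ?_⟩
  rw [iterateFrobenius_def, iterateFrobenius_def, ← pow_mul, ← pow_two, ← hF]
  exact FiniteField.pow_card x

lemma aux_field {F : Type} [Field F] (q : ℕ) (hmod : q % 3 = 1) (s : F →+* F)
    (hs : ∀ x, s x = x ^ q) (h3 : (3 : F) ≠ 0) (a b c n : F) (hn : n ≠ 0)
    (ha : a ^ (q + 1) = n) (hb : b ^ (q + 1) = n) (hc : c ^ (q + 1) = n)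
    (h : a + b + c = 0) : False := by
  have hc0 : c ≠ 0 := by
    rintro rfl
    rw [zero_pow (by omega)] at hc
    exact hn hc.symm
  have hsum : s a + s b + s c = 0 := by rw [← map_add, ← map_add, h, map_zero]
  rw [pow_succ, ← hs] at ha hb hc
  have key : n * (a * b + b * c + c * a) = 0 := by
    linear_combination (a * b * c) * hsum - (b * c) * ha - (a * c) * hb - (a * b) * hc
  have key2 : a * b + b * c + c * a = 0 := (mul_eq_zero.1 key).resolve_left hn
  have key3 : a ^ 2 + a * c + c ^ 2 = 0 := by
    linear_combination (a + c) * h - key2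
  obtain ⟨x, rfl⟩ : ∃ x, a = x * c := ⟨a / c, by field_simp⟩
  have hx : x ^ 2 + x + 1 = 0 := by
    have : c ^ 2 * (x ^ 2 + x + 1) = 0 := by linear_combination key3
    exact (mul_eq_zero.1 this).resolve_left (pow_ne_zero _ hc0)
  have hx3 : x ^ 3 = 1 := by linear_combination (x - 1) * hx
  have hsx : s x = x := by
    rw [hs, ← Nat.div_add_mod q 3, hmod, pow_succ, pow_mul, hx3]; simp
  have hx2 : x ^ 2 = 1 := by
    rw [map_mul, hsx] at ha
    have : n * (x ^ 2 - 1) = 0 := by linear_combination ha - x ^ 2 * hc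
    have := (mul_eq_zero.1 this).resolve_left hn
    linear_combination this
  have hx1 : x = 1 := by linear_combination hx3 - x * hx2
  apply h3
  rw [hx1] at hx
  linear_combination hx

theorem stmt16 (q : ℕ) (hq : IsPrimePow q) (hcop : Nat.Coprime q 3) (hmod : q % 3 = 1)
    (F : Type) [Field F] [Fintype F] (hF : Fintype.card F = q ^ 2) :
    (∀ B C : Fin 3 → Fin 3 → F, IsON q B → IsON q C → ¬ IsMUB q B C)
    ∧ ∃ B : Fin 3 → Fin 3 → F, IsON q B := by
  obtain ⟨s, hs, hss⟩ := aux_hom q hq F hF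
  have hq0 : q ≠ 0 := by omega
  have h3 : (3 : F) ≠ 0 := by
    intro h
    have hc : ((q ^ 2 : ℕ) : F) = 0 := by rw [← hF]; exact FiniteField.cast_card_eq_zero F
    have hqF : (q : F) = 0 := by
      push_cast at hc
      exact pow_eq_zero_iff (two_ne_zero) |>.1 hc
    have h2 : ((3 * (q / 3) + q % 3 : ℕ) : F) = 0 := by rw [Nat.div_add_mod]; exact hqF
    rw [hmod] at h2
    push_cast at h2
    rw [h] at h2
    simp at h2
  constructor
  · intro B C hB hC hM
    let M : Matrix (Fin 3) (Fin 3) F := Matrix.of B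
    let N : Matrix (Fin 3) (Fin 3) F := Matrix.of C
    have e1 : M.map s * M.transpose = 1 := by
      ext i j
      have := hB i j
      simp only [hermInner] at this
      simp [Matrix.mul_apply, M, hs, this, Matrix.one_apply]
    have e2 : N.map s * N.transpose = 1 := by
      ext i j
      have := hC i j
      simp only [hermInner] at this
      simp [Matrix.mul_apply, N, hs, this, Matrix.one_apply]
    have e3 := mul_eq_one_comm.1 e1
    have e4 : (N.map s * M.transpose) * (M.map s * N.transpose) = 1 := by
      rw [Matrix.mul_assoc, ← Matrix.mul_assoc M.transpose, e3, Matrix.one_mul, e2]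
    have e5 := congrFun (congrFun e4 0) 1
    rw [Matrix.mul_apply, Fin.sum_univ_three] at e5
    have hH : ∀ i j, (M.map s * N.transpose) i j = hermInner q (B i) (C j) := by
      intro i j
      simp [Matrix.mul_apply, M, N, hs, hermInner]
    have hG : ∀ i j, (N.map s * M.transpose) j i = (hermInner q (B i) (C j)) ^ q := by
      intro i j
      rw [← hs, hermInner, map_sum]
      simp only [Matrix.mul_apply, map_mul, ← hs, hss]
      simp [M, N, mul_comm]
    simp only [hH, hG] at e5
    rw [Matrix.one_apply_ne (by decide)] at e5
    have hn : ∀ i, ((hermInner q (B i) (C 0)) ^ q * hermInner q (B i) (C 1)) ^ (q + 1)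
        = ((3 : F)⁻¹) ^ q * (3 : F)⁻¹ := by
      intro i
      have h0 := hM i 0
      have h1 := hM i 1
      push_cast at h0 h1
      rw [mul_pow, h1, ← pow_mul, mul_comm q, pow_mul, h0]
    exact aux_field q hmod s hs h3 _ _ _ _
      (mul_ne_zero (pow_ne_zero _ (inv_ne_zero h3)) (inv_ne_zero h3)) (hn 0) (hn 1) (hn 2) e5
  · refine ⟨fun i j => if i = j then 1 else 0, fun i j => ?_⟩
    simp only [hermInner, ite_pow, one_pow, zero_pow hq0]
    simp [eq_comm]
end

section
/- The polynomial f in ℚ[x₁, …, x₈] given by f = x₁²x₅² + x₁²x₆² + 2x₁x₃x₅x₇ + 2x₁x₃x₆x₈ + 2x₁x₄x₅x₈ − 2x₁x₄x₆x₇ + x₂²x₅² + x₂²x₆² − 2x₂x₃x₅x₈ + 2x₂x₃x₆x₇ + 2x₂x₄x₅x₇ + 2x₂x₄x₆x₈ + x₃²x₇² + x₃²x₈² + x₄²x₇² + x₄²x₈² − 2 (equivalently, f = A² + B² − 2 where A = x₁x₅ + x₂x₆ + x₃x₇ + x₄x₈ and B = x₁x₆ − x₂x₅ + x₃x₈ −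 x₄x₇) is absolutely irreducible, i.e., it is irreducible as an element of 𝔸[x₁, …, x₈] for 𝔸 an algebraic closure of ℚ. -/
open MvPolynomial

noncomputable section

/-- `A = x₁x₅ + x₂x₆ + x₃x₇ + x₄x₈` (variables `X 0, …, X 7` stand for `x₁, …, x₈`). -/
def Apoly : MvPolynomial (Fin 8) ℚ :=
  X 0 * X 4 + X 1 * X 5 + X 2 * X 6 + X 3 * X 7

/-- `B = x₁x₆ − x₂x₅ + x₃x₈ − x₄x₇`. -/
def Bpoly : MvPolynomial (Fin 8) ℚ :=
  X 0 * X 5 - X 1 * X 4 + X 2 * X 7 - X 3 * X 6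

/-- The quartic `f` expressing the mutual-unbiasedness constraint in dimension 2. -/
def fpoly : MvPolynomial (Fin 8) ℚ :=
  X 0 ^ 2 * X 4 ^ 2 + X 0 ^ 2 * X 5 ^ 2
    + 2 * X 0 * X 2 * X 4 * X 6 + 2 * X 0 * X 2 * X 5 * X 7
    + 2 * X 0 * X 3 * X 4 * X 7 - 2 * X 0 * X 3 * X 5 * X 6
    + X 1 ^ 2 * X 4 ^ 2 + X 1 ^ 2 * X 5 ^ 2
    - 2 * X 1 * X 2 * X 4 * X 7 + 2 * X 1 * X 2 * X 5 * X 6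
    + 2 * X 1 * X 3 * X 4 * X 6 + 2 * X 1 * X 3 * X 5 * X 7
    + X 2 ^ 2 * X 6 ^ 2 + X 2 ^ 2 * X 7 ^ 2
    + X 3 ^ 2 * X 6 ^ 2 + X 3 ^ 2 * X 7 ^ 2
    - 2

section helpers
variable {K : Type*} [Field K]

lemma not_mem_vars_aux (p : MvPolynomial (Fin 8) K)
    (h : p ∈ supported K ({0}ᶜ : Set (Fin 8))) : (0 : Fin 8) ∉ p.vars := by
  intro h0
  have := (mem_supported.1 h) (Finset.mem_coe.2 h0)
  simp at this

lemma irred_aux (c : K) (hc : 2 * c = 1) :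
    Irreducible ((16 * (X 1 * X 4 + X 3 * X 6) * X 5) * X 0
      + (16 * (X 1 * X 4 + X 3 * X 6) * (X 2 * X 7) - 2) : MvPolynomial (Fin 8) K) := by
  have h2 : (2 : K) ≠ 0 := fun h => by simp [h] at hc
  have h16 : (16 : K) ≠ 0 := by
    have : (16 : K) = 2 ^ 4 := by norm_num
    rw [this]; exact pow_ne_zero _ h2
  have hC : 2 * (C c : MvPolynomial (Fin 8) K) = 1 := by
    rw [← C_1, ← hc, C_mul]; rfl
  have hX : ∀ i : Fin 8, i ≠ 0 →
      (X i : MvPolynomial (Fin 8) K) ∈ supported K ({0}ᶜ : Set (Fin 8)) := fun i hi =>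
    X_mem_supported.2 (by simpa using hi)
  have hn : ∀ n : ℕ, (n : MvPolynomial (Fin 8) K) ∈ supported K ({0}ᶜ : Set (Fin 8)) :=
    fun n => natCast_mem _ n
  have hQ : (16 * (X 1 * X 4 + X 3 * X 6) : MvPolynomial (Fin 8) K)
      ∈ supported K ({0}ᶜ : Set (Fin 8)) :=
    mul_mem (hn 16) (add_mem (mul_mem (hX 1 (by decide)) (hX 4 (by decide)))
      (mul_mem (hX 3 (by decide)) (hX 6 (by decide))))
  apply irreducible_mul_X_add
  · intro h
    have := congrArg (eval (fun i : Fin 8 => if i = 3 ∨ i = 6 ∨ i = 5 then (1 : K) else 0)) h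
    simp [h16] at this
  · exact not_mem_vars_aux _ (mul_mem hQ (hX 5 (by decide)))
  · exact not_mem_vars_aux _ (sub_mem (mul_mem hQ
      (mul_mem (hX 2 (by decide)) (hX 7 (by decide)))) (hn 2))
  · apply IsRelPrime.mul_left
    · apply IsCoprime.isRelPrime
      refine ⟨C c * (X 2 * X 7), - C c, ?_⟩
      linear_combination hC
    · rw [(X_prime (R := K) (i := (5 : Fin 8))).irreducible.isRelPrime_iff_not_dvd]
      rintro ⟨q, hq⟩
      have := congrArg (eval (fun _ : Fin 8 => (0 : K))) hq
      simp at this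
      rw [map_ofNat] at this
      exact h2 this

/-- linear change of variables on pairs -/
def fwd (I : K) : Fin 8 → MvPolynomial (Fin 8) K :=
  ![X 0 + X 1, C I * (X 0 - X 1), X 2 + X 3, C I * (X 2 - X 3),
    X 4 + X 5, C I * (X 4 - X 5), X 6 + X 7, C I * (X 6 - X 7)]

def bwd (I c : K) : Fin 8 → MvPolynomial (Fin 8) K :=
  ![C c * (X 0 - C I * X 1), C c * (X 0 + C I * X 1), C c * (X 2 - C I * X 3),
    C c * (X 2 + C I * X 3), C c * (X 4 - C I * X 5), C c * (X 4 + C I * X 5),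
    C c * (X 6 - C I * X 7), C c * (X 6 + C I * X 7)]

def chg (I c : K) (hI : I ^ 2 = -1) (hc : 2 * c = 1) :
    MvPolynomial (Fin 8) K ≃ₐ[K] MvPolynomial (Fin 8) K :=
  have hC : 2 * (C c : MvPolynomial (Fin 8) K) = 1 := by
    rw [← C_1, ← hc, C_mul]; rfl
  have hCI : (C I : MvPolynomial (Fin 8) K) ^ 2 = -1 := by
    rw [← C_pow, hI]; simp
  AlgEquiv.ofAlgHom (aeval (fwd I)) (aeval (bwd I c))
    (by
      apply algHom_ext
      intro i
      fin_cases i <;> simp [fwd, bwd, algHom_C, algebraMap_eq]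
      · linear_combination (X 0) * hC - C c * (X 0 - X 1) * hCI
      · linear_combination (X 1) * hC + C c * (X 0 - X 1) * hCI
      · linear_combination (X 2) * hC - C c * (X 2 - X 3) * hCI
      · linear_combination (X 3) * hC + C c * (X 2 - X 3) * hCI
      · linear_combination (X 4) * hC - C c * (X 4 - X 5) * hCI
      · linear_combination (X 5) * hC + C c * (X 4 - X 5) * hCI
      · linear_combination (X 6) * hC - C c * (X 6 - X 7) * hCI
      · linear_combination (X 7) * hC + C c * (X 6 - X 7) * hCI)
    (by
      apply algHom_ext
      intro i
      fin_cases i <;> simp [fwd, bwd, algHom_C, algebraMap_eq]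
      · linear_combination (X 0) * hC
      · linear_combination (X 1) * hC - 2 * C c * X 1 * hCI
      · linear_combination (X 2) * hC
      · linear_combination (X 3) * hC - 2 * C c * X 3 * hCI
      · linear_combination (X 4) * hC
      · linear_combination (X 5) * hC - 2 * C c * X 5 * hCI
      · linear_combination (X 6) * hC
      · linear_combination (X 7) * hC - 2 * C c * X 7 * hCI)

end helpers

lemma fpoly_eq : fpoly = Apoly ^ 2 + Bpoly ^ 2 - 2 := by
  unfold fpoly Apoly Bpoly; ring

/-- The polynomial `f ∈ ℚ[x₁,…,x₈]` (equal to `A² + B² − 2`) is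
absolutely irreducible: it is irreducible over an algebraic closure of `ℚ`. -/
theorem stmt17 :
    fpoly = Apoly ^ 2 + Bpoly ^ 2 - 2
    ∧ Irreducible (MvPolynomial.map (algebraMap ℚ (AlgebraicClosure ℚ)) fpoly) := by
  refine ⟨fpoly_eq, ?_⟩
  obtain ⟨I, hI⟩ := IsAlgClosed.exists_pow_nat_eq (-1 : AlgebraicClosure ℚ) (n := 2) (by norm_num)
  have hc : (2 : AlgebraicClosure ℚ) * (1 / 2) = 1 := by norm_num
  have hCI : (C I : MvPolynomial (Fin 8) (AlgebraicClosure ℚ)) ^ 2 = -1 := by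
    rw [← C_pow, hI]; simp
  rw [← MulEquiv.irreducible_iff (chg I (1 / 2) hI hc)]
  convert irred_aux (1 / 2 : AlgebraicClosure ℚ) hc using 1
  rw [fpoly_eq]
  simp only [chg, AlgEquiv.ofAlgHom_apply, Apoly, Bpoly, map_add, map_sub, map_mul, map_pow,
    map_X, aeval_X, map_ofNat]
  simp [fwd]
  generalize (C I : MvPolynomial (Fin 8) (AlgebraicClosure ℚ)) = J at *
  have h4 : J ^ 4 = 1 := by linear_combination (J ^ 2 - 1) * hCI
  ring_nf
  simp only [hCI, h4]
  ring

end
end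

section
/- For q = 3 (so 𝔽_{q²} = 𝔽_9), there exists a set of eight pairwise mutually unbiased orthonormal bases of 𝔽_9^7; that is, M_7(𝔽_9) = 8, even though 3 is not congruent to −1 modulo 7. -/
open Finset

/-- Real part of the entries of the eight bases. -/
def eRe (k : Fin 8) (m j : Fin 7) : ℤ :=
  if k.val = 7 then (if m.val = j.val then 1 else 0)
  else if (j.val + k.val) % 7 = 0 then 1 else 0

/-- Imaginary part of the entries of the eight bases. -/
def eIm (k : Fin 8) (m j : Fin 7) : ℤ :=
  if k.val = 7 then 0
  else if (j.val + k.val) % 7 = 0 then 0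
  else if m.val = 0 then -1 else if (j.val + k.val) % 7 = m.val then -1 else 1

def sum7 (f : Fin 7 → ℤ) : ℤ := f 0 + f 1 + f 2 + f 3 + f 4 + f 5 + f 6

def iRe (k l : Fin 8) (m n : Fin 7) : ℤ :=
  sum7 fun j => eRe k m j * eRe l n j + eIm k m j * eIm l n j

def iIm (k l : Fin 8) (m n : Fin 7) : ℤ :=
  sum7 fun j => eRe k m j * eIm l n j - eIm k m j * eRe l n j

theorem on_dec : ∀ (k : Fin 8) (m n : Fin 7),
    iRe k k m n % 3 = (if m = n then 1 else 0) ∧ iIm k k m n % 3 = 0 := by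
  decide +kernel

theorem mub_dec : ∀ (k l : Fin 8) (m n : Fin 7), k ≠ l →
    (iRe k l m n % 3 = 0 ∧ iIm k l m n % 3 ≠ 0) ∨
    (iRe k l m n % 3 ≠ 0 ∧ iIm k l m n % 3 = 0) := by
  decide +kernel

section
variable {F : Type} [Field F]

theorem cast_mod3 (h3 : (3 : F) = 0) (x : ℤ) : (x : F) = ((x % 3 : ℤ) : F) := by
  conv_lhs => rw [← Int.emod_add_mul_ediv x 3]
  push_cast
  rw [h3]; ring

theorem cast_cases (h3 : (3 : F) = 0) (x : ℤ) :
    (x % 3 = 0 ∧ (x : F) = 0) ∨ (x % 3 = 1 ∧ (x : F) = 1) ∨ (x % 3 = 2 ∧ (x : F) = -1) := by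
  rw [cast_mod3 h3 x]
  have : x % 3 = 0 ∨ x % 3 = 1 ∨ x % 3 = 2 := by omega
  rcases this with h | h | h <;> rw [h] <;> simp
  linear_combination h3

theorem cube_cast (h3 : (3 : F) = 0) (x : ℤ) : (x : F) ^ 3 = x := by
  rcases cast_cases h3 x with h | h | h <;> rw [h.2] <;> ring

theorem herm_eq (h3 : (3 : F) = 0) {I : F} (hI : I * I = -1) (k l : Fin 8) (m n : Fin 7) :
    hermInner 3 (fun j => (eRe k m j : F) + eIm k m j * I)
      (fun j => (eRe l n j : F) + eIm l n j * I)
      = (iRe k l m n : F) + iIm k l m n * I := by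
  have key : ∀ a b c d : ℤ, ((a : F) + b * I) ^ 3 * (c + d * I)
      = ((a * c + b * d : ℤ) : F) + ((a * d - b * c : ℤ) : F) * I := by
    intro a b c d
    have : ((a : F) + b * I) ^ 3 = a - b * I := by
      have ha := cube_cast h3 a
      have hb := cube_cast h3 b
      linear_combination ha - I * hb + (b : F) ^ 3 * I * hI
        + ((a : F) ^ 2 * b * I + a * b ^ 2 * I ^ 2) * h3
    rw [this]; push_cast
    linear_combination (-(b : F) * d) * hI
  simp only [hermInner, key, iRe, iIm, sum7, Fin.sum_univ_seven]
  push_cast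
  ring

theorem herm_swap [Fintype F] (hF : Fintype.card F = 9) [CharP F 3] {d : ℕ} (u v : Fin d → F) :
    hermInner 3 v u = (hermInner 3 u v) ^ 3 := by
  have : Fact (Nat.Prime 3) := ⟨by norm_num⟩
  unfold hermInner
  rw [sum_pow_char]
  refine Finset.sum_congr rfl fun j _ => ?_
  have : (u j) ^ 9 = u j := by rw [← hF]; exact FiniteField.pow_card _
  rw [mul_pow, ← pow_mul, this]; ring

/-- The projection onto a vector, as a function on pairs. -/
def proj (u : Fin 7 → F) : Fin 7 × Fin 7 → F := fun p => u p.1 * (u p.2) ^ 3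

/-- The trace pairing with a projection. -/
def pair (u : Fin 7 → F) : (Fin 7 × Fin 7 → F) →ₗ[F] F where
  toFun w := ∑ p : Fin 7 × Fin 7, ((u p.1) ^ 3 * u p.2) * w p
  map_add' x y := by simp [mul_add, Finset.sum_add_distrib]
  map_smul' c x := by
    simp only [Pi.smul_apply, smul_eq_mul, RingHom.id_apply, Finset.mul_sum]
    exact Finset.sum_congr rfl fun _ _ => by ring

theorem pair_proj [Fintype F] (hF : Fintype.card F = 9) [CharP F 3] (u v : Fin 7 → F) :
    pair u (proj v) = (hermInner 3 u v) ^ 4 := by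
  have : pair u (proj v) = hermInner 3 u v * hermInner 3 v u := by
    simp only [pair, proj, hermInner, LinearMap.coe_mk, AddHom.coe_mk, Finset.sum_mul_sum,
      Fintype.sum_prod_type]
    exact Finset.sum_congr rfl fun _ _ => Finset.sum_congr rfl fun _ _ => by ring
  rw [this, herm_swap hF u v]; ring

end

theorem upper (F : Type) [Field F] [Fintype F] (hF : Fintype.card F = 9) [CharP F 3]
    (B : Fin 9 → Fin 7 → Fin 7 → F)
    (hO : ∀ i, IsON 3 (B i)) (hM : ∀ i j, i ≠ j → IsMUB 3 (B i) (B j)) : False := by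
  let v : Fin 9 × Fin 6 → (Fin 7 × Fin 7 → F) := fun x =>
    proj (B x.1 x.2.castSucc) - proj (B x.1 (Fin.last 6))
  have hv : ∀ x y : Fin 9 × Fin 6, pair (B x.1 x.2.castSucc) (v y) = if y = x then 1 else 0 := by
    rintro ⟨i, a⟩ ⟨j, b⟩
    simp only [v, map_sub, pair_proj hF]
    by_cases hij : i = j
    · subst hij
      rw [hO i, hO i, if_neg (Fin.castSucc_lt_last a).ne]
      by_cases hab : a = b
      · subst hab; simp
      · have : ¬ b = a := fun h => hab h.symm
        simp [hab, this]
    · have h1 := hM i j hij a.castSucc b.castSucc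
      have h2 := hM i j hij a.castSucc (Fin.last 6)
      have : ¬ j = i := fun h => hij h.symm
      norm_num at h1 h2
      rw [h1, h2]
      simp [this]
  have hli : LinearIndependent F v := by
    rw [Fintype.linearIndependent_iff]
    intro g hg x
    have := congrArg (pair (B x.1 x.2.castSucc)) hg
    simpa [map_sum, hv] using this
  have := hli.fintype_card_le_finrank
  simp at this

/-- For `q = 3` (so `𝔽_{q²} = 𝔽_9`): there exists a set of eight
pairwise mutually unbiased orthonormal bases of `𝔽_9^7` and no set of nine, i.e.
`M_7(𝔽_9) = 8`, even though `3 ≢ −1 (mod 7)`. -/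
theorem stmt18 (F : Type) [Field F] [Fintype F] (hF : Fintype.card F = 9) :
    (∃ B : Fin 8 → Fin 7 → Fin 7 → F,
        (∀ i, IsON 3 (B i)) ∧ ∀ i j, i ≠ j → IsMUB 3 (B i) (B j))
    ∧ (¬ ∃ B : Fin 9 → Fin 7 → Fin 7 → F,
        (∀ i, IsON 3 (B i)) ∧ ∀ i j, i ≠ j → IsMUB 3 (B i) (B j))
    ∧ ¬ (3 % 7 = 7 - 1) := by
  have h3 : (3 : F) = 0 := by
    have h9 : ((Fintype.card F : ℕ) : F) = 0 := FiniteField.cast_card_eq_zero F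
    rw [hF] at h9
    have : (3 : F) * 3 = 0 := by
      push_cast at h9
      linear_combination h9
    simpa using this
  have : Fact (Nat.Prime 3) := ⟨by norm_num⟩
  have : CharP F 3 := (CharP.charP_iff_prime_eq_zero (by norm_num)).2 (by exact_mod_cast h3)
  refine ⟨?_, fun ⟨B, hO, hM⟩ => upper F hF B hO hM, by norm_num⟩
  obtain ⟨I, hI⟩ : IsSquare (-1 : F) := by
    rw [FiniteField.isSquare_neg_one_iff, hF]; norm_num
  have hI := hI.symm
  have h7 : (((7 : ℕ) : F))⁻¹ = 1 := by
    have : ((7 : ℕ) : F) = 1 := by push_cast; linear_combination 2 * h3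
    rw [this, inv_one]
  refine ⟨fun k m j => (eRe k m j : F) + eIm k m j * I, ?_, ?_⟩
  · intro k m n
    obtain ⟨h1, h2⟩ := on_dec k m n
    rw [herm_eq h3 hI, cast_mod3 h3 (iRe k k m n), cast_mod3 h3 (iIm k k m n), h1, h2]
    split_ifs <;> simp
  · intro k l hkl m n
    rw [h7, herm_eq h3 hI]
    have h4 : I ^ 4 = 1 := by linear_combination (I * I - 1) * hI
    rcases mub_dec k l m n hkl with ⟨h1, h2⟩ | ⟨h1, h2⟩ <;>
    rcases cast_cases h3 (iRe k l m n) with h | h | h <;>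
    rcases cast_cases h3 (iIm k l m n) with h' | h' | h' <;>
    first
    | (exfalso; omega)
    | (rw [h.2, h'.2]; norm_num [h4])
end
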